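/- arXiv:1812.11294 — 7 statements merged into one kernel-verified Lean document; each statement's English description precedes it below -/
import Mathlib

section
/- Let p be an odd prime, K a finite field of characteristic p, and n ≥ 1. Let s ∈ SO(M) be semisimple, i.e. the order of s is coprime to p. Then for every natural number i, the matrix s^(p^i) is conjugate in SO(M) to the Frobenius twist σ(s): there exists a matrix h over K with hᵀ * M * h = M and det h = 1 such that s^(p^i) * h = h * σ(s). (In particular σ(s) again lies in SO(M).) -/
open Matrix
open LinearMap (BilinForm)

lemma aux_field {K F : Type} [Field K] [Fintype K] [Field F] [Algebra K F] [FiniteDimensional K F]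
    (p : ℕ) [Fact p.Prime] [CharP K p] (hodd : Odd p) (i : ℕ) (ζ : F)
    (hζ : Algebra.adjoin K {ζ} = ⊤) (B : BilinForm K F) (hsym : ∀ x y, B x y = B y x)
    (hnd : ∀ x, (∀ y, B x y = 0) → x = 0) (hB : ∀ x y, B (ζ * x) (ζ * y) = B x y) :
    ∃ f : F →ₛₗ[iterateFrobenius K p i] F,
      (∀ x y, B (f x) (f y) = (B x y) ^ p ^ i) ∧ ∀ x, f (ζ * x) = ζ ^ p ^ i * f x := by
  have : CharP F p := charP_of_injective_algebraMap (algebraMap K F).injective p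
  have : Finite F := Module.finite_of_finite K
  have hζ0 : ζ ≠ 0 := by
    rintro rfl
    exact one_ne_zero (hnd 1 fun y => by rw [← hB]; simp)
  have hex : ∀ z : F, ∃ z' : F, ∀ x y, B (z * x) y = B x (z' * y) := by
    intro z
    have hz : z ∈ Algebra.adjoin K {ζ} := by rw [hζ]; trivial
    induction hz using Algebra.adjoin_induction with
    | mem x hx =>
      obtain rfl : x = ζ := hx
      refine ⟨x⁻¹, fun a b => ?_⟩
      rw [← hB a, mul_inv_cancel_left₀ hζ0]
    | algebraMap r =>
      refine ⟨algebraMap K F r, fun a b => ?_⟩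
      simp [← Algebra.smul_def]
    | add x y _ _ hx hy =>
      obtain ⟨x', hx⟩ := hx
      obtain ⟨y', hy⟩ := hy
      exact ⟨x' + y', fun a b => by simp [add_mul, hx, hy]⟩
    | mul x y _ _ hx hy =>
      obtain ⟨x', hx⟩ := hx
      obtain ⟨y', hy⟩ := hy
      exact ⟨y' * x', fun a b => by rw [mul_assoc, hx, hy, mul_assoc]⟩
  choose τ hτ using hex
  have huniq : ∀ z z', (∀ x y, B (z * x) y = B x (z' * y)) → τ z = z' := by
    intro z z' h
    rw [← sub_eq_zero]
    refine hnd _ fun y => ?_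
    rw [hsym]
    have := h y 1
    rw [hτ] at this
    simpa [sub_eq_zero] using this
  let T : F →ₐ[K] F :=
    { toFun := τ
      map_one' := huniq _ _ (by simp)
      map_zero' := huniq _ _ (by simp)
      map_add' := fun x y => huniq _ _ (fun a b => by simp [add_mul, hτ])
      map_mul' := fun x y => huniq _ _ (fun a b => by
        rw [mul_assoc, hτ, hτ, ← mul_assoc, mul_comm (τ y)])
      commutes' := fun r => huniq _ _ (fun a b => by simp [← Algebra.smul_def]) }
  have hT : ∀ z x y, B (z * x) y = B x (T z * y) := hτ
  have hbij := Algebra.IsAlgebraic.algHom_bijective T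
  have htrT : ∀ z, Algebra.trace K F (T z) = Algebra.trace K F z := fun z =>
    Algebra.trace_eq_of_algEquiv (AlgEquiv.ofBijective T hbij) z
  have htrnd := traceForm_nondegenerate K F
  obtain ⟨a, ha⟩ : ∃ a : F, ∀ z, B 1 z = Algebra.trace K F (a * z) := by
    refine ⟨((Algebra.traceForm K F).toDual htrnd).symm (B 1), fun z => ?_⟩
    rw [← Algebra.traceForm_apply, BilinForm.apply_toDual_symm_apply]
  have haT : T a = a := by
    rw [← sub_eq_zero]
    refine htrnd.1 _ fun y => ?_
    obtain ⟨z, rfl⟩ := hbij.2 y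
    rw [Algebra.traceForm_apply, sub_mul, map_sub, ← map_mul, htrT, ← ha, ← ha, sub_eq_zero]
    have := hT z 1 1
    rw [mul_one, mul_one] at this
    rw [← this, hsym]
  have hBT : ∀ x y, B x y = Algebra.trace K F (a * (T x * y)) := by
    intro x y
    rw [← ha, ← hT, mul_one]
  have htrq : ∀ x, Algebra.trace K F (x ^ p ^ i) = (Algebra.trace K F x) ^ p ^ i := by
    intro x
    apply (algebraMap K F).injective
    rw [map_pow (algebraMap K F), FiniteField.algebraMap_trace_eq_sum_pow, FiniteField.algebraMap_trace_eq_sum_pow,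
      sum_pow_char_pow]
    exact Finset.sum_congr rfl fun j _ => by rw [← pow_mul, ← pow_mul, mul_comm]
  obtain ⟨m, hm⟩ : Odd (p ^ i) := hodd.pow
  refine ⟨{ toFun := fun x => a ^ m * x ^ p ^ i
            map_add' := fun x y => by rw [add_pow_char_pow, mul_add]
            map_smul' := fun k x => by
              rw [iterateFrobenius_def, Algebra.smul_def, Algebra.smul_def, mul_pow, map_pow]; ring },
    fun x y => ?_, fun x => ?_⟩
  · change B (a ^ m * x ^ p ^ i) (a ^ m * y ^ p ^ i) = _
    rw [hBT, hBT, ← htrq]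
    congr 1
    rw [map_mul, map_pow, map_pow, haT, mul_pow, mul_pow]
    have : a ^ p ^ i = a * a ^ m * a ^ m := by rw [hm]; ring
    rw [this]; ring
  · change a ^ m * (ζ * x) ^ p ^ i = ζ ^ p ^ i * (a ^ m * x ^ p ^ i)
    ring

lemma aux_simple {K V : Type} [Field K] [AddCommGroup V] [Module K V] [FiniteDimensional K V]
    [Nontrivial V] (s : V →ₗ[K] V)
    (hs : ∀ U : Submodule K V, (∀ x ∈ U, s x ∈ U) → U = ⊥ ∨ U = ⊤) :
    ∃ (F : Type) (_ : Field F) (_ : Algebra K F) (ζ : F) (e : V ≃ₗ[K] F),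
      (∀ x, e (s x) = ζ * e x) ∧ Algebra.adjoin K {ζ} = ⊤ := by
  have hnt : Nontrivial (Module.AEval' s) := inferInstanceAs (Nontrivial V)
  have hsim : IsSimpleModule (Polynomial K) (Module.AEval' s) := by
    rw [isSimpleModule_iff]
    refine { eq_bot_or_eq_top := fun q => ?_ }
    rcases hs ((q.restrictScalars K).comap (Module.AEval'.of s).toLinearMap) (fun x hx => by
      have := q.smul_mem Polynomial.X hx
      change Module.AEval'.of s (s x) ∈ q
      rw [← Module.AEval'.X_smul_of]
      exact this) with h | h
    · left
      rw [eq_bot_iff]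
      intro x hx
      have : (Module.AEval'.of s).symm x ∈
        ((q.restrictScalars K).comap (Module.AEval'.of s).toLinearMap) := by simpa using hx
      rw [h] at this
      simpa using this
    · right
      rw [eq_top_iff]
      intro x _
      have : (Module.AEval'.of s).symm x ∈
        ((q.restrictScalars K).comap (Module.AEval'.of s).toLinearMap) := by rw [h]; trivial
      simpa using this
  obtain ⟨I, hI, ⟨e⟩⟩ := isSimpleModule_iff_quot_maximal.mp hsim
  let e' : V ≃ₗ[K] (Polynomial K ⧸ I) :=
    (Module.AEval'.of s).trans (e.restrictScalars K)
  refine ⟨Polynomial K ⧸ I, Ideal.Quotient.field I, inferInstance,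
    Ideal.Quotient.mk I Polynomial.X, e', fun x => ?_, ?_⟩
  · change e (Module.AEval'.of s (s x)) = _ * e (Module.AEval'.of s x)
    rw [← Module.AEval'.X_smul_of, map_smul]
    rfl
  · have h := Polynomial.adjoin_X (R := K)
    have h2 := congrArg (Subalgebra.map (Ideal.Quotient.mkₐ K I)) h
    rw [AlgHom.map_adjoin, Algebra.map_top, Set.image_singleton] at h2
    rw [show (⊤ : Subalgebra K (Polynomial K ⧸ I)) = (Ideal.Quotient.mkₐ K I).range from
      ((AlgHom.range_eq_top _).2 (Ideal.Quotient.mkₐ_surjective K I)).symm]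
    exact h2

lemma aux_pow_e {K V F : Type} [Field K] [AddCommGroup V] [Module K V] [Field F] [Algebra K F]
    (s : V →ₗ[K] V) (ζ : F) (e : V ≃ₗ[K] F) (he : ∀ x, e (s x) = ζ * e x) (m : ℕ) (x : V) :
    e ((s ^ m) x) = ζ ^ m * e x := by
  induction m with
  | zero => simp
  | succ m ih => rw [pow_succ', Module.End.mul_apply, he, ih, pow_succ']; ring

lemma aux_semi {K V : Type} [Field K] [Fintype K] [AddCommGroup V] [Module K V]
    [FiniteDimensional K V] [Nontrivial V] (p : ℕ) [Fact p.Prime] [CharP K p] (i : ℕ)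
    (s : V →ₗ[K] V)
    (hs : ∀ U : Submodule K V, (∀ x ∈ U, s x ∈ U) → U = ⊥ ∨ U = ⊤) :
    ∃ f : V →ₛₗ[iterateFrobenius K p i] V, Function.Bijective f ∧
      ∀ x, f (s x) = (s ^ p ^ i) (f x) := by
  obtain ⟨F, _, _, ζ, e, he, -⟩ := aux_simple s hs
  have : CharP F p := charP_of_injective_algebraMap (algebraMap K F).injective p
  have : Finite V := Module.finite_of_finite K
  refine ⟨{ toFun := fun x => e.symm ((e x) ^ p ^ i)
            map_add' := fun x y => by rw [map_add, add_pow_char_pow, map_add]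
            map_smul' := fun k x => by
              rw [iterateFrobenius_def, map_smul, ← map_smul e.symm, Algebra.smul_def,
                Algebra.smul_def, mul_pow, map_pow] }, ?_, fun x => ?_⟩
  · rw [← Finite.injective_iff_bijective]
    intro x y h
    have h1 : e.symm ((e x) ^ p ^ i) = e.symm ((e y) ^ p ^ i) := h
    exact e.injective (iterateFrobenius_inj F p i (e.symm.injective h1))
  · apply e.injective
    rw [aux_pow_e s ζ e he]
    change e (e.symm ((e (s x)) ^ p ^ i)) = ζ ^ p ^ i * e (e.symm ((e x) ^ p ^ i))
    simp [he, mul_pow]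

lemma aux_simple_nd {K V : Type} [Field K] [Fintype K] [AddCommGroup V] [Module K V]
    [FiniteDimensional K V] [Nontrivial V] (p : ℕ) [Fact p.Prime] [CharP K p] (hodd : Odd p) (i : ℕ)
    (s : V →ₗ[K] V)
    (hs : ∀ U : Submodule K V, (∀ x ∈ U, s x ∈ U) → U = ⊥ ∨ U = ⊤)
    (B : BilinForm K V) (hsym : ∀ x y, B x y = B y x)
    (hnd : ∀ x, (∀ y, B x y = 0) → x = 0) (hB : ∀ x y, B (s x) (s y) = B x y) :
    ∃ f : V →ₛₗ[iterateFrobenius K p i] V,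
      (∀ x y, B (f x) (f y) = (B x y) ^ p ^ i) ∧
      ∀ x, f (s x) = (s ^ p ^ i) (f x) := by
  obtain ⟨F, _, _, ζ, e, he, hadj⟩ := aux_simple s hs
  have : FiniteDimensional K F := e.finiteDimensional
  have hes : ∀ x, e.symm (ζ * x) = s (e.symm x) := fun x => by
    apply e.injective
    simp [he]
  obtain ⟨g, hg1, hg2⟩ := aux_field p hodd i ζ hadj (BilinForm.congr e B)
    (fun x y => by simp [hsym (e.symm x)])
    (fun x h => by
      rw [← e.symm.map_eq_zero_iff]
      refine hnd _ fun y => ?_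
      simpa using h (e y))
    (fun x y => by simp [hes, hB])
  refine ⟨(e.symm.toLinearMap.comp g).comp e.toLinearMap, fun x y => ?_, fun x => ?_⟩
  · simpa using hg1 (e x) (e y)
  · apply e.injective
    rw [aux_pow_e s ζ e he]
    simp [he, hg2]

lemma aux_combine {K V : Type} [Field K] [AddCommGroup V] [Module K V]
    (σ : K →+* K) (q : ℕ) (hσ : ∀ k, σ k = k ^ q)
    (s t : V →ₗ[K] V) (B : BilinForm K V) (hsym : ∀ x y, B x y = B y x)
    (U W : Submodule K V) (h : IsCompl U W) (hU : ∀ x ∈ U, s x ∈ U) (hW : ∀ x ∈ W, s x ∈ W)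
    (f : U →ₛₗ[σ] V) (g : W →ₛₗ[σ] V)
    (hf : ∀ x y : U, B (f x) (f y) = (B x y) ^ q)
    (hg : ∀ x y : W, B (g x) (g y) = (B x y) ^ q)
    (hfg : ∀ (x : U) (y : W), B (f x) (g y) = (B x y) ^ q)
    (hfs : ∀ x : U, f ⟨s x, hU x x.2⟩ = t (f x))
    (hgs : ∀ x : W, g ⟨s x, hW x x.2⟩ = t (g x)) :
    ∃ F : V →ₛₗ[σ] V, (∀ x y, B (F x) (F y) = (B x y) ^ q) ∧ ∀ x, F (s x) = t (F x) := by
  have hadd : ∀ a b : K, (a + b) ^ q = a ^ q + b ^ q := fun a b => by simp [← hσ]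
  let F : V →ₛₗ[σ] V := f.comp (U.projectionOnto W h) + g.comp (W.projectionOnto U h.symm)
  have hF : ∀ (u : U) (w : W), F (u + w) = f u + g w := by
    intro u w
    simp [F]
  have hsplit : ∀ x : V, ∃ (u : U) (w : W), x = u + w := by
    intro x
    have hx : x ∈ U ⊔ W := by rw [h.sup_eq_top]; trivial
    obtain ⟨u, hu, w, hw, rfl⟩ := Submodule.mem_sup.1 hx
    exact ⟨⟨u, hu⟩, ⟨w, hw⟩, rfl⟩
  refine ⟨F, fun x y => ?_, fun x => ?_⟩
  · obtain ⟨u, w, rfl⟩ := hsplit x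
    obtain ⟨u', w', rfl⟩ := hsplit y
    simp only [hF, map_add, LinearMap.add_apply, hadd, hf, hg, hfg]
    rw [hsym (g w) (f u'), hfg, hsym u']
  · obtain ⟨u, w, rfl⟩ := hsplit x
    rw [hF, map_add s, map_add t, ← hfs, ← hgs]
    exact hF ⟨s u, hU u u.2⟩ ⟨s w, hW w w.2⟩

lemma aux_min {K V : Type} [Field K] [AddCommGroup V] [Module K V] [FiniteDimensional K V]
    (s : V →ₗ[K] V) (C : Submodule K V) (hC : C ≠ ⊥) (hCs : ∀ x ∈ C, s x ∈ C) :
    ∃ W ≤ C, W ≠ ⊥ ∧ (∀ x ∈ W, s x ∈ W) ∧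
      ∀ U ≤ W, (∀ x ∈ U, s x ∈ U) → U = ⊥ ∨ U = W := by
  obtain ⟨W, ⟨h1, h2, h3⟩, h4⟩ := (wellFounded_lt (α := Submodule K V)).has_min
    {U | U ≤ C ∧ U ≠ ⊥ ∧ ∀ x ∈ U, s x ∈ U} ⟨C, le_rfl, hC, hCs⟩
  refine ⟨W, h1, h2, h3, fun U hU hUs => ?_⟩
  by_contra! hcon
  exact h4 U ⟨hU.trans h1, hcon.1, hUs⟩ (lt_of_le_of_ne hU hcon.2)

lemma aux_min_restrict {K V : Type} [Field K] [AddCommGroup V] [Module K V]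
    (s : V →ₗ[K] V) (W : Submodule K V) (hWs : ∀ x ∈ W, s x ∈ W)
    (h : ∀ U ≤ W, (∀ x ∈ U, s x ∈ U) → U = ⊥ ∨ U = W) :
    ∀ U : Submodule K W, (∀ x ∈ U, s.restrict hWs x ∈ U) → U = ⊥ ∨ U = ⊤ := by
  intro U hU
  rcases h (U.map W.subtype) (Submodule.map_subtype_le _ _) (by
    rintro _ ⟨x, hx, rfl⟩
    exact ⟨_, hU x hx, rfl⟩) with h | h
  · left
    apply Submodule.map_injective_of_injective W.injective_subtype
    rw [h, Submodule.map_bot]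
  · right
    apply Submodule.map_injective_of_injective W.injective_subtype
    rw [h, Submodule.map_top, Submodule.range_subtype]

lemma aux_restrict_pow {K V : Type} [Field K] [AddCommGroup V] [Module K V]
    (s : V →ₗ[K] V) (W : Submodule K V) (hWs : ∀ x ∈ W, s x ∈ W) (m : ℕ) (x : W) :
    (((s.restrict hWs) ^ m) x : V) = (s ^ m) (x : V) := by
  induction m with
  | zero => simp
  | succ m ih => rw [pow_succ', pow_succ', Module.End.mul_apply, Module.End.mul_apply, ← ih]; rfl

lemma aux_hyp {K V : Type} [Field K] [Fintype K] [AddCommGroup V] [Module K V]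
    [FiniteDimensional K V] (p : ℕ) [Fact p.Prime] [CharP K p] (i : ℕ)
    (s : V →ₗ[K] V) (B : BilinForm K V) (hsym : ∀ x y, B x y = B y x)
    (hnd : ∀ x, (∀ y, B x y = 0) → x = 0) (hB : ∀ x y, B (s x) (s y) = B x y)
    (U W : Submodule K V) (h : IsCompl U W) (hU : ∀ x ∈ U, s x ∈ U) (hW : ∀ x ∈ W, s x ∈ W)
    (hU0 : U ≠ ⊥) (hUm : ∀ U' ≤ U, (∀ x ∈ U', s x ∈ U') → U' = ⊥ ∨ U' = U)
    (hUi : ∀ x ∈ U, ∀ y ∈ U, B x y = 0) (hWi : ∀ x ∈ W, ∀ y ∈ W, B x y = 0) :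
    ∃ f : V →ₛₗ[iterateFrobenius K p i] V,
      (∀ x y, B (f x) (f y) = (B x y) ^ p ^ i) ∧
      ∀ x, f (s x) = (s ^ p ^ i) (f x) := by
  have : Nontrivial U := Submodule.nontrivial_iff_ne_bot.2 hU0
  have hq : p ^ i ≠ 0 := pow_ne_zero _ (Fact.out : p.Prime).ne_zero
  obtain ⟨f, hfb, hfs⟩ := aux_semi p i (s.restrict hU) (aux_min_restrict s U hU hUm)
  have hBnd : B.Nondegenerate := ⟨fun x hx => hnd x hx, fun x hx => hnd x fun y => by
    rw [hsym]; exact hx y⟩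
  have hsplit : ∀ x : V, ∃ (u : U) (w : W), x = u + w := by
    intro x
    have hx : x ∈ U ⊔ W := by rw [h.sup_eq_top]; trivial
    obtain ⟨u, hu, w, hw, rfl⟩ := Submodule.mem_sup.1 hx
    exact ⟨⟨u, hu⟩, ⟨w, hw⟩, rfl⟩
  have hσsurj : Function.Surjective (iterateFrobenius K p i) :=
    Finite.injective_iff_surjective.1 (iterateFrobenius_inj K p i)
  -- functionals on `U` are represented by `W`
  have hrep : ∀ φ : U →ₗ[K] K, ∃ w : W, ∀ x : U, B x w = φ x := by
    intro φ
    obtain ⟨ψ, hψ⟩ := φ.exists_extend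
    obtain ⟨u, w, huw⟩ := hsplit ((B.toDual hBnd).symm ψ)
    refine ⟨w, fun x => ?_⟩
    have h1 : B ((B.toDual hBnd).symm ψ) x = ψ x := BilinForm.apply_toDual_symm_apply _ _
    rw [huw, map_add, LinearMap.add_apply, hUi u u.2 x x.2, zero_add, hsym] at h1
    rw [h1, ← hψ]; rfl
  have hun : ∀ w w' : W, (∀ x : U, B x w = B x w') → w = w' := by
    intro w w' hw
    rw [← sub_eq_zero, ← Submodule.coe_eq_zero]
    refine hnd _ fun y => ?_
    obtain ⟨u, v, rfl⟩ := hsplit y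
    rw [map_add, hWi _ (w - w').2 _ v.2, add_zero, hsym]
    simp [hw]
  have hex : ∀ w : W, ∃ w' : W, ∀ x : U, B (f x) w' = (B x w) ^ p ^ i := by
    intro w
    let E := Equiv.ofBijective f hfb
    have hE : ∀ x, E x = f x := fun x => rfl
    have hEadd : ∀ x y, E.symm (x + y) = E.symm x + E.symm y := fun x y => by
      rw [Equiv.symm_apply_eq, hE, map_add, ← hE, ← hE]; simp
    have hEsmul : ∀ k x, E.symm (iterateFrobenius K p i k • x) = k • E.symm x := fun k x => by
      rw [Equiv.symm_apply_eq, hE, map_smulₛₗ, ← hE]; simp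
    obtain ⟨w', hw'⟩ := hrep
      { toFun := fun x => iterateFrobenius K p i (B (E.symm x) w)
        map_add' := fun x y => by simp [hEadd]
        map_smul' := fun k x => by
          obtain ⟨k, rfl⟩ := hσsurj k
          rw [hEsmul]
          simp }
    refine ⟨w', fun x => ?_⟩
    rw [hw' (f x), ← hE]
    simp [iterateFrobenius_def]
  choose g hg using hex
  have hg' : ∀ w w' : W, (∀ x : U, B (f x) w' = (B x w) ^ p ^ i) → g w = w' := by
    intro w w' hw
    refine hun _ _ fun x => ?_
    obtain ⟨x, rfl⟩ := hfb.2 x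
    rw [hg, hw]
  have hBq : ∀ x y, B ((s ^ p ^ i) x) ((s ^ p ^ i) y) = B x y := by
    intro x y
    generalize p ^ i = m
    induction m with
    | zero => simp
    | succ m ih => rw [pow_succ', Module.End.mul_apply, Module.End.mul_apply, hB, ih]
  have hWpow : ∀ x ∈ W, (s ^ p ^ i) x ∈ W := fun x hx => by
    have := aux_restrict_pow s W hW (p ^ i) ⟨x, hx⟩
    rw [← this]; exact Subtype.prop _
  have hsinj : Function.Injective s := by
    intro x y hxy
    rw [← sub_eq_zero]
    refine hnd _ fun z => ?_
    rw [← hB, map_sub, hxy]; simp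
  have hsUsurj : Function.Surjective (s.restrict hU) := by
    rw [← LinearMap.injective_iff_surjective]
    intro x y hxy
    exact Subtype.ext (hsinj (congrArg Subtype.val hxy))
  let G : W →ₛₗ[iterateFrobenius K p i] W :=
    { toFun := g
      map_add' := fun x y => hg' _ _ fun u => by
        simp [hg, add_pow_char_pow]
      map_smul' := fun k x => hg' _ _ fun u => by
        simp [hg, iterateFrobenius_def, mul_pow] }
  refine aux_combine (iterateFrobenius K p i) (p ^ i) (fun k => iterateFrobenius_def p i k)
    s (s ^ p ^ i) B hsym U W h hU hW (U.subtype.comp f) (W.subtype.comp G) ?_ ?_ ?_ ?_ ?_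
  · intro x y
    rw [hUi _ x.2 _ y.2, zero_pow hq]
    exact hUi _ (f x).2 _ (f y).2
  · intro x y
    rw [hWi _ x.2 _ y.2, zero_pow hq]
    exact hWi _ (G x).2 _ (G y).2
  · intro x y
    exact hg y x
  · intro x
    have := congrArg Subtype.val (hfs x)
    rw [aux_restrict_pow] at this
    exact this
  · intro w
    have : g ⟨s w, hW w w.2⟩ = ⟨(s ^ p ^ i) (g w), hWpow _ (g w).2⟩ := by
      refine hg' _ _ fun u => ?_
      obtain ⟨u, rfl⟩ := hsUsurj u
      rw [hfs, aux_restrict_pow]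
      simp [hBq, hB, hg]
    exact congrArg Subtype.val this

theorem aux_main {K : Type} [Field K] [Fintype K] (p : ℕ) [Fact p.Prime] [CharP K p]
    (hodd : Odd p) (i N : ℕ) (hN : (N : K) ≠ 0) (d : ℕ) :
    ∀ (V : Type) [AddCommGroup V] [Module K V] [FiniteDimensional K V]
      (_ : Module.finrank K V = d)
      (s : V →ₗ[K] V) (B : BilinForm K V) (_ : ∀ x y, B x y = B y x)
      (_ : ∀ x, (∀ y, B x y = 0) → x = 0) (_ : ∀ x y, B (s x) (s y) = B x y) (_ : s ^ N = 1),
    ∃ f : V →ₛₗ[iterateFrobenius K p i] V,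
      (∀ x y, B (f x) (f y) = (B x y) ^ p ^ i) ∧
      ∀ x, f (s x) = (s ^ p ^ i) (f x) := by
  induction d using Nat.strong_induction_on with
  | _ d ih =>
  intro V _ _ _ hd s B hsym hnd hB hsN
  have hq : p ^ i ≠ 0 := pow_ne_zero _ (Fact.out : p.Prime).ne_zero
  have hrefl : B.IsRefl := fun x y h => by rw [hsym, h]
  have hsinj : Function.Injective s := by
    intro x y hxy
    rw [← sub_eq_zero]
    refine hnd _ fun z => ?_
    rw [← hB, map_sub, hxy]; simp
  have horth : ∀ U : Submodule K V, (∀ x ∈ U, s x ∈ U) →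
      ∀ x ∈ B.orthogonal U, s x ∈ B.orthogonal U := by
    intro U hU x hx
    rw [BilinForm.mem_orthogonal_iff] at hx ⊢
    intro u hu
    have hsUsurj : Function.Surjective (s.restrict hU) := by
      rw [← LinearMap.injective_iff_surjective]
      intro x y hxy
      exact Subtype.ext (hsinj (congrArg Subtype.val hxy))
    obtain ⟨⟨u', hu'⟩, h⟩ := hsUsurj ⟨u, hu⟩
    obtain rfl : s u' = u := congrArg Subtype.val h
    have := hx u' hu'
    rw [hB, this]
  -- reduction
  by_cases hred : ∃ U : Submodule K V, U ≠ ⊥ ∧ U ≠ ⊤ ∧ (∀ x ∈ U, s x ∈ U) ∧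
      Disjoint U (B.orthogonal U)
  · obtain ⟨U, hU0, hU1, hUs, hdisj⟩ := hred
    have hc := (BilinForm.isCompl_orthogonal_iff_disjoint hrefl).2 hdisj
    have horth0 : ∀ x ∈ U, ∀ y ∈ B.orthogonal U, B x y = 0 := fun x hx y hy =>
      (BilinForm.mem_orthogonal_iff.1 hy) x hx
    have key : ∀ W W' : Submodule K V, IsCompl W W' → W ≠ ⊤ → (∀ x ∈ W, ∀ y ∈ W', B x y = 0) →
        ∀ hWs : (∀ x ∈ W, s x ∈ W),
        ∃ f : W →ₛₗ[iterateFrobenius K p i] W,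
          (∀ x y : W, B (f x) (f y) = (B x y) ^ p ^ i) ∧
          ∀ x : W, (f ⟨s x, hWs x x.2⟩ : V) = (s ^ p ^ i) (f x) := by
      intro W W' hWW hW1 hBW hWs
      obtain ⟨f, hf1, hf2⟩ := ih (Module.finrank K W) (hd ▸ Submodule.finrank_lt hW1) W rfl
        (s.restrict hWs) (B.restrict W) (fun x y => hsym _ _) (fun x hx => by
          rw [← Submodule.coe_eq_zero]
          refine hnd _ fun y => ?_
          have hy : y ∈ W ⊔ W' := by rw [hWW.sup_eq_top]; trivial
          obtain ⟨u, hu, w, hw, rfl⟩ := Submodule.mem_sup.1 hy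
          rw [map_add, hBW x x.2 w hw, add_zero]
          exact hx ⟨u, hu⟩) (fun x y => hB _ _) (by
          ext x
          rw [aux_restrict_pow, hsN]; rfl)
      refine ⟨f, hf1, fun x => ?_⟩
      rw [← aux_restrict_pow s W hWs, ← hf2]; rfl
    have hO1 : B.orthogonal U ≠ ⊤ := by
      intro h
      rw [h, disjoint_top] at hdisj
      exact hU0 hdisj
    obtain ⟨f, hf1, hf2⟩ := key U _ hc hU1 horth0 hUs
    obtain ⟨g, hg1, hg2⟩ := key _ U hc.symm hO1
      (fun x hx y hy => by rw [hsym, horth0 y hy x hx]) (horth U hUs)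
    refine aux_combine (iterateFrobenius K p i) (p ^ i) (fun k => iterateFrobenius_def p i k)
      s (s ^ p ^ i) B hsym U _ hc hUs (horth U hUs) (U.subtype.comp f)
      ((B.orthogonal U).subtype.comp g) hf1 hg1 ?_ hf2 hg2
    intro x y
    have h1 : B x y = 0 := horth0 x x.2 y y.2
    have h2 : B (f x) (g y) = 0 := horth0 _ (f x).2 _ (g y).2
    rw [h1, zero_pow hq]
    exact h2
  · push Not at hred
    rcases subsingleton_or_nontrivial V with hV | hV
    · refine ⟨0, fun x y => ?_, fun x => Subsingleton.elim _ _⟩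
      rw [Subsingleton.elim x 0, map_zero, map_zero, LinearMap.zero_apply, LinearMap.zero_apply, zero_pow hq]
    have htop : (⊤ : Submodule K V) ≠ ⊥ := top_ne_bot
    obtain ⟨U, -, hU0, hUs, hUm⟩ := aux_min s ⊤ htop (fun _ _ => trivial)
    -- minimal is either everything or isotropic
    have hdich : ∀ W : Submodule K V, W ≠ ⊥ → (∀ x ∈ W, s x ∈ W) →
        (∀ U ≤ W, (∀ x ∈ U, s x ∈ U) → U = ⊥ ∨ U = W) → W = ⊤ ∨ ∀ x ∈ W, ∀ y ∈ W, B x y = 0 := by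
      intro W hW0 hWs hWm
      rcases hWm (W ⊓ B.orthogonal W) inf_le_left
        (fun x hx => ⟨hWs x hx.1, horth W hWs x hx.2⟩) with h | h
      · left
        by_contra hW1
        exact hred W hW0 hW1 hWs (disjoint_iff.2 h)
      · right
        intro x hx y hy
        rw [← h] at hy
        exact (BilinForm.mem_orthogonal_iff.1 hy.2) x hx
    have hfin : (∀ U : Submodule K V, (∀ x ∈ U, s x ∈ U) → U = ⊥ ∨ U = ⊤) →
      ∃ f : V →ₛₗ[iterateFrobenius K p i] V,
      (∀ x y, B (f x) (f y) = (B x y) ^ p ^ i) ∧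
      ∀ x, f (s x) = (s ^ p ^ i) (f x) := fun h => aux_simple_nd p hodd i s h B hsym hnd hB
    rcases hdich U hU0 hUs hUm with rfl | hUi
    · exact hfin fun W hW => hUm W le_top hW
    -- semisimplicity
    have hss : Module.End.IsSemisimple s := by
      refine Module.End.isSemisimple_of_squarefree_aeval_eq_zero
        (p := (Polynomial.X ^ N - 1 : Polynomial K))
        (Polynomial.X_pow_sub_one_separable_iff.2 hN).squarefree ?_
      simp [hsN]
    rw [Module.End.isSemisimple_iff] at hss
    obtain ⟨C, hCs, hC⟩ := hss (B.orthogonal U) (horth U hUs)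
    have hO : B.orthogonal U ≠ ⊤ := by
      intro h
      apply hU0
      rw [eq_bot_iff]
      intro x hx
      refine hnd x fun y => ?_
      have hy : y ∈ B.orthogonal U := by rw [h]; trivial
      exact (BilinForm.mem_orthogonal_iff.1 hy) x hx
    have hC0 : C ≠ ⊥ := by
      rintro rfl
      exact hO (by simpa using hC.sup_eq_top)
    obtain ⟨W, hWC, hW0, hWs, hWm⟩ := aux_min s C hC0 hCs
    rcases hdich W hW0 hWs hWm with rfl | hWi
    · exact hfin fun W hW => hWm W le_top hW
    have hWO : Disjoint W (B.orthogonal U) := (hC.disjoint.mono_right hWC).symm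
    have hUO : Disjoint U (B.orthogonal W) := by
      rw [disjoint_iff]
      rcases hUm (U ⊓ B.orthogonal W) inf_le_left
        (fun x hx => ⟨hUs x hx.1, horth W hWs x hx.2⟩) with h | h
      · exact h
      · exfalso
        apply hW0
        rw [eq_bot_iff]
        intro w hw
        refine hWO.le_bot ⟨hw, ?_⟩
        refine BilinForm.mem_orthogonal_iff.2 fun u hu => ?_
        rw [← h] at hu
        have : B w u = 0 := (BilinForm.mem_orthogonal_iff.1 hu.2) w hw
        rw [hsym, this]
    have hUW : Disjoint U W := by
      refine hWO.symm.mono_left fun x hx => ?_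
      exact BilinForm.mem_orthogonal_iff.2 fun u hu => hUi u hu x hx
    have hsup : U ⊔ W = ⊤ := by
      by_contra hne
      refine hred (U ⊔ W) (fun h => hU0 (eq_bot_iff.2 (h ▸ le_sup_left))) hne ?_ ?_
      · intro x hx
        obtain ⟨u, hu, w, hw, rfl⟩ := Submodule.mem_sup.1 hx
        rw [map_add]
        exact Submodule.add_mem_sup (hUs u hu) (hWs w hw)
      · rw [Submodule.disjoint_def]
        intro x hx hxo
        obtain ⟨u, hu, w, hw, rfl⟩ := Submodule.mem_sup.1 hx
        have hxo' : ∀ y ∈ U ⊔ W, B y (u + w) = 0 := fun y hy =>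
          (BilinForm.mem_orthogonal_iff.1 hxo) y hy
        have hw0 : w = 0 := (Submodule.disjoint_def.1 hWO) w hw
          (BilinForm.mem_orthogonal_iff.2 fun y hy => by
            have := hxo' y (le_sup_left (a := U) hy)
            rwa [map_add, hUi y hy u hu, zero_add] at this)
        have hu0 : u = 0 := (Submodule.disjoint_def.1 hUO) u hu
          (BilinForm.mem_orthogonal_iff.2 fun y hy => by
            have := hxo' y (le_sup_right (a := U) hy)
            rwa [map_add, hWi y hy w hw, add_zero] at this)
        rw [hu0, hw0, add_zero]
    exact aux_hyp p i s B hsym hnd hB U W ⟨hUW, codisjoint_iff.2 hsup⟩ hUs hWs hU0 hUm hUi hWi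

/-- Let `p` be an odd prime, `K` a finite field of characteristic `p`,
`n ≥ 1`, and `M` the antidiagonal Gram matrix of size `2n+1`.  If `s ∈ SO(M)` is
semisimple (its order is coprime to `p`), then for every `i` the matrix `s^(p^i)` is
conjugate in `SO(M)` to the Frobenius twist `σ(s)` (entrywise `x ↦ x^(p^i)`); in
particular `σ(s)` again lies in `SO(M)`. -/
theorem stmt_0 (p : ℕ) (hp : p.Prime) (hodd : Odd p)
    (K : Type) [Field K] [Fintype K] [CharP K p]
    (n : ℕ) (hn : 1 ≤ n)
    (M : Matrix (Fin (2 * n + 1)) (Fin (2 * n + 1)) K)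
    (hM : ∀ i j : Fin (2 * n + 1), M i j = if (i : ℕ) + (j : ℕ) = 2 * n then 1 else 0)
    (s : Matrix (Fin (2 * n + 1)) (Fin (2 * n + 1)) K)
    (hs1 : sᵀ * M * s = M) (hs2 : s.det = 1)
    (hss : Nat.Coprime (orderOf s) p) (i : ℕ) :
    (s.map fun x => x ^ p ^ i)ᵀ * M * (s.map fun x => x ^ p ^ i) = M ∧
    (s.map fun x => x ^ p ^ i).det = 1 ∧
    ∃ h : Matrix (Fin (2 * n + 1)) (Fin (2 * n + 1)) K,
      hᵀ * M * h = M ∧ h.det = 1 ∧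
      s ^ p ^ i * h = h * s.map fun x => x ^ p ^ i := by
  have : Fact p.Prime := ⟨hp⟩
  set σ := iterateFrobenius K p i with hσ
  have hq : p ^ i ≠ 0 := pow_ne_zero _ hp.ne_zero
  have hmap : (s.map fun x => x ^ p ^ i) = σ.mapMatrix s := by
    ext a b; simp [hσ, iterateFrobenius_def]
  have hMσ : σ.mapMatrix M = M := by
    ext a b
    simp only [RingHom.mapMatrix_apply, Matrix.map_apply, hM]
    split_ifs <;> simp
  have hMsym : Mᵀ = M := by
    ext a b
    simp only [Matrix.transpose_apply, hM, add_comm]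
  have hMM : M * M = 1 := by
    ext a b
    rw [Matrix.mul_apply, Finset.sum_eq_single (Fin.rev a)]
    · simp only [hM, Fin.val_rev, Matrix.one_apply, Fin.ext_iff]
      have := a.2
      have := b.2
      split_ifs <;> first | omega | simp
    · intro c _ hc
      rw [hM, if_neg, zero_mul]
      intro h
      apply hc
      ext
      rw [Fin.val_rev]
      omega
    · simp
  rw [hmap]
  refine ⟨?_, ?_, ?_⟩
  · have := congrArg σ.mapMatrix hs1
    rw [map_mul, map_mul, hMσ] at this
    exact this
  · rw [← RingHom.map_det, hs2, map_one]
  -- the bilinear form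
  let B : BilinForm K (Fin (2 * n + 1) → K) := Matrix.toBilin' M
  have hBapp : ∀ x y, B x y = x ⬝ᵥ M *ᵥ y := fun x y => Matrix.toBilin'_apply' M x y
  have hsym : ∀ x y, B x y = B y x := by
    intro x y
    rw [hBapp, hBapp, Matrix.dotProduct_mulVec, ← Matrix.mulVec_transpose, hMsym, dotProduct_comm]
  have hnd : ∀ x, (∀ y, B x y = 0) → x = 0 := by
    intro x hx
    refine dotProduct_eq_zero x fun y => ?_
    have := hx (M *ᵥ y)
    rwa [hBapp, Matrix.mulVec_mulVec, hMM, Matrix.one_mulVec] at this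
  have hB : ∀ x y, B (Matrix.toLin' s x) (Matrix.toLin' s y) = B x y := by
    intro x y
    rw [hBapp, hBapp, Matrix.toLin'_apply, Matrix.toLin'_apply, Matrix.mulVec_mulVec,
      ← Matrix.vecMul_transpose, ← Matrix.dotProduct_mulVec, Matrix.mulVec_mulVec,
      ← Matrix.mul_assoc, hs1]
  have hN : ((orderOf s : ℕ) : K) ≠ 0 := by
    rw [Ne, CharP.cast_eq_zero_iff K p]
    exact fun h => (Nat.Prime.coprime_iff_not_dvd hp).1 hss.symm h
  have hsN : (Matrix.toLin' s) ^ orderOf s = 1 := by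
    rw [← Matrix.toLin'_pow, pow_orderOf_eq_one, Matrix.toLin'_one]; rfl
  obtain ⟨f, hf1, hf2⟩ := aux_main p hodd i (orderOf s) hN _ (Fin (2 * n + 1) → K) rfl
    (Matrix.toLin' s) B hsym hnd hB hsN
  let h : Matrix (Fin (2 * n + 1)) (Fin (2 * n + 1)) K :=
    Matrix.of fun a b => f (Pi.single b 1) a
  have hcol : ∀ b, h *ᵥ Pi.single b 1 = f (Pi.single b 1) := by
    intro b
    ext a
    simp [h]
  have hfx : ∀ x, f x = h *ᵥ (fun j => σ (x j)) := by
    intro x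
    conv_lhs => rw [pi_eq_sum_univ' x]
    rw [map_sum]
    ext a
    simp only [map_smulₛₗ, Finset.sum_apply, Pi.smul_apply, smul_eq_mul, Matrix.mulVec, dotProduct]
    refine Finset.sum_congr rfl fun j _ => ?_
    simp only [h, Matrix.of_apply]
    rw [mul_comm]
  have hh : hᵀ * M * h = M := by
    ext a b
    have h1 := hf1 (Pi.single a 1) (Pi.single b 1)
    rw [hBapp, hBapp, ← hcol, ← hcol, Matrix.mulVec_mulVec, ← Matrix.vecMul_transpose,
      ← Matrix.dotProduct_mulVec, Matrix.mulVec_mulVec, ← Matrix.mul_assoc] at h1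
    simp only [Matrix.mulVec_single_one, single_one_dotProduct, Matrix.col_apply] at h1
    rw [h1, hM]
    split_ifs
    · rw [one_pow]
    · rw [zero_pow hq]
  have hint : s ^ p ^ i * h = h * σ.mapMatrix s := by
    ext a b
    have h1 := congrFun (hf2 (Pi.single b 1)) a
    rw [← Matrix.toLin'_pow, Matrix.toLin'_apply, Matrix.toLin'_apply, ← hcol, Matrix.mulVec_mulVec,
      hfx] at h1
    simp only [Matrix.mulVec_single_one, Matrix.col_apply] at h1
    rw [← h1, Matrix.mul_apply]
    rfl
  have hdet : h.det = 1 ∨ h.det = -1 := by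
    have h1 := congrArg Matrix.det hh
    have h2 := congrArg Matrix.det hMM
    rw [Matrix.det_mul, Matrix.det_mul, Matrix.det_transpose] at h1
    rw [Matrix.det_mul, Matrix.det_one] at h2
    rw [← mul_self_eq_one_iff]
    linear_combination M.det * h1 + (1 - h.det * h.det) * h2
  rcases hdet with hd | hd
  · exact ⟨h, hh, hd, hint⟩
  · refine ⟨-h, by simpa using hh, ?_, by simpa using hint⟩
    rw [Matrix.det_neg, hd, Fintype.card_fin, pow_succ, pow_mul]
    simp
end

section
/- Let p be an odd prime, K a finite field of characteristic p, and n ≥ 1. Let s ∈ SO(M) be semisimple, i.e. the order of s is coprime to p, and let i be a natural number. Then the cyclic subgroups generated by s and by its Frobenius twist σ(s) are conjugate in SO(M): there exists a matrix h over K with hᵀ * M * h = M and det h = 1 such that { h⁻¹ * s^k * h : k ∈ ℕ } = { σ(s)^k : k ∈ ℕ }. -/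
section Aux
open Polynomial
lemma aux_field_s1 (F : Type*) [Field F] [Finite F] (h2 : (2:F) ≠ 0) (d b : F) (h : d = 0 → b = 1) :
    ∃ x y : F, x^2 - d*y^2 = b := by
  classical
  have := Fintype.ofFinite F
  by_cases hd : d = 0
  · exact ⟨1, 0, by simp [hd, h hd]⟩
  · have h1 : degree (X^2 - C b : F[X]) = 2 := degree_X_pow_sub_C (by decide) _
    have h3 : degree (C (-d) * X^2 : F[X]) = 2 := degree_C_mul_X_pow 2 (by simpa using hd)
    have hc : Fintype.card F % 2 = 1 := by
      apply FiniteField.odd_card_of_char_ne_two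
      intro hh
      apply h2
      have := ringChar.Nat.cast_ringChar (R := F)
      rw [hh] at this
      exact_mod_cast this
    obtain ⟨x, y, hxy⟩ := FiniteField.exists_root_sum_quadratic h1 h3 hc
    refine ⟨x, y, ?_⟩
    simp at hxy
    linear_combination hxy

lemma aux_ring (p : ℕ) [hp : Fact p.Prime] (hodd : Odd p) (R : Type*) [CommRing R] [Finite R] [CharP R p]
    (d b : R) (hb : IsUnit b) (h : ∀ m : Ideal R, m.IsMaximal → d ∈ m → b - 1 ∈ m) :
    ∃ x y : R, x^2 - d*y^2 = b := by
  classical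
  obtain ⟨t, ht⟩ := hodd
  have h2 : ∀ m : Ideal R, m.IsMaximal → (2:R) ∉ m := by
    intro m hm h2
    apply hm.ne_top
    rw [Ideal.eq_top_iff_one]
    have : (1:R) = - (t:R) * 2 := by
      have h0 := CharP.cast_eq_zero R p
      rw [ht] at h0; push_cast at h0
      linear_combination h0
    rw [this]; exact m.mul_mem_left _ h2
  have key : ∀ m : MaximalSpectrum R, ∃ x y : R, x^2 - d*y^2 - b ∈ m.asIdeal := by
    intro m
    have := m.isMaximal
    let := Ideal.Quotient.field m.asIdeal
    have : Finite (R ⧸ m.asIdeal) := Finite.of_surjective _ Ideal.Quotient.mk_surjective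
    obtain ⟨x, y, hxy⟩ := aux_field_s1 (R ⧸ m.asIdeal) (by
        intro h0
        apply h2 _ m.isMaximal
        rw [← Ideal.Quotient.eq_zero_iff_mem]; exact_mod_cast h0)
        (Ideal.Quotient.mk _ d) (Ideal.Quotient.mk _ b) (by
        intro h0
        have := h _ m.isMaximal (Ideal.Quotient.eq_zero_iff_mem.1 h0)
        rw [← Ideal.Quotient.eq_zero_iff_mem, map_sub, sub_eq_zero] at this
        simpa using this)
    obtain ⟨x, rfl⟩ := Ideal.Quotient.mk_surjective x
    obtain ⟨y, rfl⟩ := Ideal.Quotient.mk_surjective y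
    refine ⟨x, y, ?_⟩
    rw [← Ideal.Quotient.eq_zero_iff_mem]
    simp only [map_sub, map_mul, map_pow]
    rw [hxy, sub_self]
  choose x y hxy using key
  have cop : Pairwise (Function.onFun IsCoprime (fun m : MaximalSpectrum R => m.asIdeal)) := by
    intro m m' hmm
    rw [Function.onFun, Ideal.isCoprime_iff_sup_eq]
    apply Ideal.IsMaximal.coprime_of_ne m.isMaximal m'.isMaximal
    intro hh; exact hmm (MaximalSpectrum.ext hh)
  obtain ⟨X, hX⟩ := Ideal.exists_forall_sub_mem_ideal cop x
  obtain ⟨Y, hY⟩ := Ideal.exists_forall_sub_mem_ideal cop y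
  have hnil : IsNilpotent (X^2 - d*Y^2 - b) := by
    rw [← mem_nilradical, nilradical_eq_sInf, Ideal.mem_sInf]
    intro I hI
    have hI' : I.IsPrime := hI
    have : I.IsMaximal := inferInstance
    have h1 := hX ⟨I, this⟩
    have h2 := hY ⟨I, this⟩
    have h3 := hxy ⟨I, this⟩
    have : X^2 - d*Y^2 - b = (x ⟨I, this⟩^2 - d*y ⟨I, this⟩^2 - b) + (X + x ⟨I, this⟩) * (X - x ⟨I, this⟩)
      + (-d * (Y + y ⟨I, this⟩)) * (Y - y ⟨I, this⟩) := by ring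
    rw [this]
    exact I.add_mem (I.add_mem h3 (I.mul_mem_left _ h1)) (I.mul_mem_left _ h2)
  obtain ⟨c, hc⟩ := hb.exists_right_inv
  set ν := c * (X^2 - d*Y^2 - b) with hν
  obtain ⟨N, hN⟩ : IsNilpotent ν := (Commute.all _ _).isNilpotent_mul_left hnil
  have hpk : (1 + ν)^(p^N) = 1 := by
    rw [add_pow_char_pow, one_pow]
    rw [pow_eq_zero_of_le (Nat.lt_pow_self hp.out.one_lt).le hN, add_zero]
  obtain ⟨r, hr⟩ : Odd (p^N) := Odd.pow ⟨t, ht⟩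
  refine ⟨(1+ν)^r * X, (1+ν)^r*Y, ?_⟩
  have e1 : X^2 - d*Y^2 = b * (1+ν) := by
    rw [hν]; linear_combination (- (X^2 - d*Y^2 - b)) * hc
  have e2 : (1+ν)^r*(1+ν)^r*(1+ν) = 1 := by
    rw [hr] at hpk; linear_combination hpk
  linear_combination (1+ν)^r*(1+ν)^r * e1 + b * e2

lemma aux_semilin (p i : ℕ) [hp : Fact p.Prime] (R : Type*) [CommRing R] [CharP R p] (V : Type*) [AddCommGroup V]
    [Module R V] [IsSemisimpleModule R V] :
    ∃ Ψ : V →+ V, Function.Injective Ψ ∧ ∀ (r : R) (v : V), Ψ (r • v) = r^(p^i) • Ψ v := by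
  classical
  obtain ⟨S, e, -, hS⟩ := IsSemisimpleModule.exists_linearEquiv_dfinsupp R V
  have key : ∀ m : S, ∃ Ψ : m.1 →+ m.1, Function.Injective Ψ ∧ ∀ (r : R) (v : m.1), Ψ (r • v) = r^(p^i) • Ψ v := by
    intro m
    obtain ⟨I, hI, ⟨f⟩⟩ := isSimpleModule_iff_quot_maximal.mp (hS m)
    let := Ideal.Quotient.field I
    have : CharP (R ⧸ I) p := by
      apply ringChar.of_eq
      apply CharP.ringChar_of_prime_eq_zero hp.out
      rw [← map_natCast (Ideal.Quotient.mk I), CharP.cast_eq_zero, map_zero]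
    let Fr := iterateFrobenius (R ⧸ I) p i
    refine ⟨(f.symm.toAddMonoidHom).comp ((Fr : _ →+ _).comp f.toAddMonoidHom), ?_, ?_⟩
    · intro a b hab
      simp only [AddMonoidHom.comp_apply] at hab
      exact f.injective (Fr.injective (f.symm.injective hab))
    · intro r v
      have h1 : f (r • v) = Ideal.Quotient.mk I r * f v := by
        rw [map_smul, Algebra.smul_def]; rfl
      change f.symm (Fr (f (r • v))) = r^(p^i) • f.symm (Fr (f v))
      rw [h1, map_mul, ← map_smul, Algebra.smul_def]
      rfl
  choose Ψ h1 h2 using key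
  refine ⟨e.symm.toAddMonoidHom.comp ((DFinsupp.mapRange.addMonoidHom Ψ).comp e.toAddMonoidHom), ?_, ?_⟩
  · intro a b hab
    apply e.injective
    ext m : 1
    apply h1
    exact DFunLike.congr_fun (e.symm.injective hab) m
  · intro r v
    apply e.injective
    change e (e.symm (DFinsupp.mapRange.addMonoidHom Ψ (e (r • v)))) =
      e (r^(p^i) • e.symm (DFinsupp.mapRange.addMonoidHom Ψ (e v)))
    rw [map_smul e, map_smul e]
    simp only [LinearEquiv.apply_symm_apply]
    ext m : 1
    simp [h2]

lemma aux_semilin' (p i m : ℕ) [hp : Fact p.Prime] (K : Type*) [Field K] [CharP K p]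
    (V : Type*) [AddCommGroup V] [Module K V] [FiniteDimensional K V]
    (s : Module.End K V) (hs : s^m = 1) (hm : Nat.Coprime m p) :
    ∃ Ψ : V →+ V, Function.Injective Ψ ∧ (∀ (r : K) (v : V), Ψ (r • v) = r^(p^i) • Ψ v) ∧
      ∀ v, Ψ (s v) = (s^(p^i)) (Ψ v) := by
  have hsep : Squarefree (X^m - 1 : K[X]) := by
    apply Separable.squarefree
    have := separable_X_pow_sub_C (F := K) (n := m) 1 (by
      intro h
      rw [CharP.cast_eq_zero_iff K p] at h
      have := Nat.Coprime.eq_one_of_dvd hm.symm h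
      exact hp.out.one_lt.ne' this) one_ne_zero
    simpa using this
  have hss := Module.End.isSemisimple_of_squarefree_aeval_eq_zero (f := s) hsep (by simp [hs])
  unfold Module.End.IsSemisimple at hss
  obtain ⟨Ψ, h1, h2⟩ := aux_semilin p i K[X] (Module.AEval' s)
  let e := Module.AEval'.of s
  have hC : ∀ (r : K) (x : Module.AEval' s), r • x = (C r) • x := fun r x =>
    (Module.AEval.C_smul (R := K) s r x).symm
  refine ⟨e.symm.toAddMonoidHom.comp (Ψ.comp e.toAddMonoidHom), ?_, ?_, ?_⟩
  · intro a b hab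
    exact e.injective (h1 (e.symm.injective hab))
  · intro r v
    change e.symm (Ψ (e (r • v))) = _ • e.symm (Ψ (e v))
    rw [map_smul, hC, h2, ← C_pow, ← hC, map_smul]
  · intro v
    change e.symm (Ψ (e (s v))) = _
    rw [← Module.AEval'.X_smul_of, h2]
    apply e.injective
    rw [LinearEquiv.apply_symm_apply]
    obtain ⟨w, hw⟩ := e.surjective (Ψ (e v))
    have : (e.symm.toAddMonoidHom.comp (Ψ.comp e.toAddMonoidHom)) v = w := by
      change e.symm (Ψ (e v)) = w
      rw [← hw, LinearEquiv.symm_apply_apply]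
    rw [this]
    change X ^ p^i • Ψ (e v) = _
    rw [← hw]
    exact Module.AEval'.X_pow_smul_of s w (p^i)

lemma aux_orth (p i : ℕ) [hp : Fact p.Prime] (hodd : Odd p) (K : Type*) [Field K] [CharP K p]
    (V : Type*) [AddCommGroup V] [Module K V] [FiniteDimensional K V]
    (B : LinearMap.BilinForm K V) (hB : ∀ x y, B x y = B y x) :
    ∃ Φ : V →+ V, (∀ (r : K) (v : V), Φ (r • v) = r^(p^i) • Φ v) ∧
      ∀ x y, B (Φ x) (Φ y) = (B x y)^(p^i) := by
  have h2 : (2:K) ≠ 0 := by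
    intro h
    have h' : ((2:ℕ):K) = 0 := by exact_mod_cast h
    rw [CharP.cast_eq_zero_iff K p] at h'
    have := (Nat.prime_dvd_prime_iff_eq hp.out Nat.prime_two).1 h'
    subst this
    revert hodd; decide
  have := invertibleOfNonzero h2
  obtain ⟨b, hb⟩ := LinearMap.BilinForm.exists_orthogonal_basis (B := B) ⟨hB⟩
  have hb' : ∀ j k, j ≠ k → B (b j) (b k) = 0 := fun j k h => hb h
  obtain ⟨t, ht⟩ : Odd (p^i) := hodd.pow
  let κ := fun j => (B (b j) (b j))^t
  have gen : ∀ f g : Fin (Module.finrank K V) → K, B (∑ j, f j • b j) (∑ j, g j • b j) =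
      ∑ j, f j * g j * B (b j) (b j) := by
    intro f g
    simp only [map_sum, LinearMap.sum_apply, map_smul, LinearMap.smul_apply, smul_eq_mul]
    apply Finset.sum_congr rfl
    intro j _
    rw [Finset.sum_eq_single j]
    · ring
    · intro k _ hk
      rw [hb' _ _ (by tauto)]; ring
    · simp
  refine ⟨⟨⟨fun x => ∑ j, ((b.repr x j)^(p^i) * κ j) • b j, ?_⟩, ?_⟩, ?_, ?_⟩
  · simp [hp.out.ne_zero]
  · intro x y
    simp [add_pow_char_pow, add_mul, add_smul, Finset.sum_add_distrib]
  · intro r v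
    simp [mul_pow, Finset.smul_sum, mul_smul]
  · intro x y
    have hxy : B x y = ∑ j, b.repr x j * b.repr y j * B (b j) (b j) := by
      rw [← gen, b.sum_repr, b.sum_repr]
    change B (∑ j, ((b.repr x j)^(p^i) * κ j) • b j) (∑ j, ((b.repr y j)^(p^i) * κ j) • b j) = _
    rw [gen, hxy, sum_pow_char_pow]
    apply Finset.sum_congr rfl
    intro j _
    have : (B (b j) (b j))^(p^i) = κ j * κ j * (B (b j) (b j)) := by
      rw [ht]; simp only [κ]; ring
    rw [mul_pow, this]; ring

lemma aux_eig (p i : ℕ) [hp : Fact p.Prime] (hodd : Odd p) (K : Type*) [Field K] [CharP K p]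
    (V : Type*) [AddCommGroup V] [Module K V] [FiniteDimensional K V]
    (B : LinearMap.BilinForm K V) (hB : ∀ x y, B x y = B y x) (W : Submodule K V)
    (e : Module.End K V) (he : ∀ v, e v ∈ W) :
    ∃ F : V →+ V, (∀ (r : K) (v : V), F (r • v) = r^(p^i) • F v) ∧ (∀ v, F v ∈ W) ∧
      (∀ x y, e x = e y → F x = F y) ∧
      ∀ x y, B (F x) (F y) = (B (e x) (e y))^(p^i) := by
  obtain ⟨Φ, h1, h2⟩ := aux_orth p i hodd K W (B.restrict W) (fun x y => hB x y)
  let e' : V →ₗ[K] W := LinearMap.codRestrict W e he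
  refine ⟨W.subtype.toAddMonoidHom.comp (Φ.comp e'.toAddMonoidHom), ?_, ?_, ?_, ?_⟩
  · intro r v
    change ((Φ (e' (r • v)) : W) : V) = _ • ((Φ (e' v) : W) : V)
    rw [map_smul, h1]; rfl
  · intro v
    exact (Φ (e' v)).2
  · intro x y hxy
    have : e' x = e' y := Subtype.ext hxy
    change ((Φ (e' x) : W) : V) = ((Φ (e' y) : W) : V)
    rw [this]
  · intro x y
    exact h2 (e' x) (e' y)

section
variable {K V : Type*} [Field K] [AddCommGroup V] [Module K V]

open scoped IsMulCommutative in
/-- solving the norm equation -/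
lemma aux_norm (p : ℕ) [hp : Fact p.Prime] (hodd : Odd p) [Finite K] [CharP K p]
    [Nontrivial V] [FiniteDimensional K V]
    (B : LinearMap.BilinForm K V) (s a d : Module.End K V) (had : a * d = d * a)
    (hau : IsUnit a) (has : a * s = s * a) (hds : d * s = s * d)
    (haB : ∀ x y, B (a x) y = B x (a y)) (hdB : ∀ x y, B (d x) y = B x (d y))
    (N : ℕ) (hN : 0 < N) (hdN : d^N * d^N = d^N) :
    ∃ x y : Module.End K V, (∀ v w, B (x v) w = B v (x w)) ∧ (∀ v w, B (y v) w = B v (y w)) ∧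
      x * s = s * x ∧ y * s = s * y ∧ x * a = a * x ∧ y * a = a * y ∧ x * d = d * x ∧ y * d = d * y
      ∧ x * y = y * x ∧
      a * (x * x - d * (y * y)) * d^N = d^N := by
  classical
  have : Finite V := Module.finite_of_finite K
  have : Finite (Module.End K V) := Finite.of_injective (fun f => (f : V → V)) DFunLike.coe_injective
  have hcomm : ∀ u ∈ ({a, d} : Set (Module.End K V)), ∀ v ∈ ({a, d} : Set (Module.End K V)), u * v = v * u := by
    rintro u (rfl | rfl) v (rfl | rfl) <;> first | rfl | assumption | exact had.symm
  have := Algebra.isMulCommutative_adjoin K hcomm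
  set A := Algebra.adjoin K ({a, d} : Set (Module.End K V)) with hA
  have hAc : ∀ x ∈ A, ∀ y ∈ A, x * y = y * x := fun x hx y hy =>
    congrArg Subtype.val (mul_comm (⟨x, hx⟩ : A) ⟨y, hy⟩)
  have haA : a ∈ A := Algebra.subset_adjoin (by simp)
  have hdA : d ∈ A := Algebra.subset_adjoin (by simp)
  have hself : ∀ x ∈ A, ∀ v w, B (x v) w = B v (x w) := by
    intro x hx
    induction hx using Algebra.adjoin_induction with
    | mem x hx => rcases hx with rfl | rfl <;> assumption
    | algebraMap r => intro v w; simp [Module.algebraMap_end_apply]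
    | add x y _ _ h1 h2 => intro v w; simp [h1, h2]
    | mul x y hx hy h1 h2 =>
      intro v w
      rw [Module.End.mul_apply, h1, h2, ← Module.End.mul_apply, hAc y hy x hx]
  have hcs : ∀ x ∈ A, x * s = s * x := by
    intro x hx
    induction hx using Algebra.adjoin_induction with
    | mem x hx => rcases hx with rfl | rfl <;> assumption
    | algebraMap r => exact Algebra.commutes r s
    | add x y _ _ h1 h2 => rw [add_mul, mul_add, h1, h2]
    | mul x y hx hy h1 h2 => rw [mul_assoc, h2, ← mul_assoc, h1, mul_assoc]
  have : CharP A p := charP_of_injective_algebraMap (algebraMap K A).injective p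
  obtain ⟨o, ho⟩ : ∃ o, a^o * a = 1 := by
    obtain ⟨u, rfl⟩ := hau
    have := pow_orderOf_eq_one u
    have h0 := orderOf_pos u
    refine ⟨orderOf u - 1, ?_⟩
    rw [← pow_succ, Nat.sub_add_cancel h0]
    rw [← Units.val_pow_eq_pow_val, this, Units.val_one]
  let α : A := ⟨a, haA⟩
  let δ : A := ⟨d, hdA⟩
  have hα : α^o * α = 1 := Subtype.ext ho
  have hδ : δ^N * δ^N = δ^N := Subtype.ext hdN
  obtain ⟨x, y, hxy⟩ := aux_ring p hodd A δ (α^o * δ^N + (1 - δ^N)) (by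
      apply IsUnit.of_mul_eq_one (α * δ^N + (1 - δ^N))
      linear_combination (δ^N * δ^N) * hα + (1 + 1 - α^o - α) * hδ) (by
      intro m hm hd
      have : α^o * δ^N + (1 - δ^N) - 1 = (α^o - 1) * δ^N := by ring
      rw [this]
      exact m.mul_mem_left _ (m.pow_mem_of_mem hd N hN))
  have key : α * (x * x - δ * (y*y)) * δ^N = δ^N := by
    linear_combination (α * δ^N) * hxy + δ^N * δ^N * hα + (1 - α) * hδ
  exact ⟨x, y, hself x x.2, hself y y.2, hcs x x.2, hcs y y.2, hAc x x.2 a haA, hAc y y.2 a haA,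
    hAc x x.2 d hdA, hAc y y.2 d hdA, hAc x x.2 y y.2, congrArg Subtype.val key⟩
end

lemma main_abs (p i m : ℕ) [hp : Fact p.Prime] (hodd : Odd p)
    (K V : Type*) [Field K] [AddCommGroup V] [Module K V] [Finite K] [CharP K p]
    [Nontrivial V] [FiniteDimensional K V]
    (B : LinearMap.BilinForm K V) (hB : ∀ x y, B x y = B y x) (hBn : B.Nondegenerate)
    (s : Module.End K V) (hsB : ∀ x y, B (s x) (s y) = B x y)
    (hs : s^m = 1) (hm : Nat.Coprime m p) :
    ∃ Φ : V →+ V, (∀ (r : K) (v : V), Φ (r • v) = r^(p^i) • Φ v) ∧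
      (∀ v, Φ (s v) = (s^(p^i)) (Φ v)) ∧ ∀ x y, B (Φ x) (Φ y) = (B x y)^(p^i) := by
  classical
  have : Finite V := Module.finite_of_finite K
  have h2 : (2:K) ≠ 0 := by
    intro h
    have h' : ((2:ℕ):K) = 0 := by exact_mod_cast h
    rw [CharP.cast_eq_zero_iff K p] at h'
    have := (Nat.prime_dvd_prime_iff_eq hp.out Nat.prime_two).1 h'
    subst this
    revert hodd; decide
  have hm0 : 0 < m := by
    rcases Nat.eq_zero_or_pos m with rfl | h
    · simp at hm; exact absurd hm hp.out.one_lt.ne'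
    · exact h
  have hnd : ∀ x, (∀ y, B x y = 0) → x = 0 := fun x hx => hBn.1 x hx
  obtain ⟨s', hss', hs's⟩ : ∃ s', s * s' = 1 ∧ s' * s = 1 := by
    refine ⟨s^(m-1), ?_, ?_⟩
    · rw [← pow_succ', Nat.sub_add_cancel hm0, hs]
    · rw [← pow_succ, Nat.sub_add_cancel hm0, hs]
  have hc : Commute s s' := by rw [Commute, SemiconjBy, hss', hs's]
  have ss'a : ∀ v, s (s' v) = v := fun v => by rw [← Module.End.mul_apply, hss']; rfl
  have s'sa : ∀ v, s' (s v) = v := fun v => by rw [← Module.End.mul_apply, hs's]; rfl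
  have adj : ∀ x y, B (s x) y = B x (s' y) := fun x y => by rw [← hsB x (s' y), ss'a]
  have adj' : ∀ x y, B (s' x) y = B x (s y) := fun x y => by rw [← hsB (s' x) y, ss'a]
  have adjk : ∀ k x y, B ((s^k) x) y = B x ((s'^k) y) := by
    intro k
    induction k with
    | zero => intro x y; rfl
    | succ k ih =>
      intro x y
      rw [pow_succ, pow_succ', Module.End.mul_apply, Module.End.mul_apply, ih, adj]
  have adjk' : ∀ k x y, B ((s'^k) x) y = B x ((s^k) y) := by
    intro k x y
    rw [hB, ← adjk, hB]
  have eigk : ∀ (ε : K) u, s u = ε • u → ∀ k, (s^k) u = ε^k • u := by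
    intro ε u h k
    induction k with
    | zero => simp
    | succ k ih => rw [pow_succ, Module.End.mul_apply, h, map_smul, ih, smul_smul, pow_succ']
  have eigk' : ∀ (ε : K) u, ε * ε = 1 → s u = ε • u → ∀ k, (s'^k) u = ε^k • u := by
    intro ε u hε h k
    have h' : s' u = ε • u := by
      have := congrArg s' h
      rw [s'sa, map_smul] at this
      conv_rhs => rw [this]
      rw [smul_smul, hε, one_smul]
    induction k with
    | zero => simp
    | succ k ih => rw [pow_succ, Module.End.mul_apply, h', map_smul, ih, smul_smul, pow_succ']
  have orth : ∀ (ε : K) u, ε * ε = 1 → s u = ε • u → ∀ k r, B ((s^k - s'^k) r) u = 0 := by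
    intro ε u hε h k r
    rw [LinearMap.sub_apply, map_sub, LinearMap.sub_apply, adjk, adjk', eigk ε u h, eigk' ε u hε h,
      sub_self]
  have orth' : ∀ (ε : K) u, ε * ε = 1 → s u = ε • u → ∀ k r, B u ((s^k - s'^k) r) = 0 := by
    intro ε u hε h k r
    rw [hB, orth ε u hε h]
  have orth12 : ∀ u v, s u = (1:K) • u → s v = (-1:K) • v → B u v = 0 := by
    intro u v hu hv
    have := hsB u v
    rw [hu, hv] at this
    simp at this
    have h3 : 2 * B u v = 0 := by linear_combination -this
    exact (mul_eq_zero.1 h3).resolve_left h2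
  -- z and the idempotents
  have : CharP (Module.End K V) p :=
    charP_of_injective_algebraMap (algebraMap K (Module.End K V)).injective p
  set z := s - s' with hz
  obtain ⟨N, hN, hzN⟩ : ∃ N, 0 < N ∧ z^(2*N+1) = z := by
    obtain ⟨N, hN⟩ : Odd (p^(Nat.totient m)) := hodd.pow
    refine ⟨N, ?_, ?_⟩
    · rcases Nat.eq_zero_or_pos N with rfl | h
      · have := Nat.one_lt_pow (Nat.totient_pos.2 hm0).ne' hp.out.one_lt
        omega
      · exact h
    · have hmod := Nat.ModEq.pow_totient hm.symm
      have hs's : s'^m = 1 := by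
        have : (s*s')^m = 1 := by rw [hss', one_pow]
        rwa [hc.mul_pow, hs, one_mul] at this
      have e : ∀ t : Module.End K V, t^m = 1 → t^(p^(Nat.totient m)) = t := by
        intro t ht
        rw [pow_eq_pow_mod _ ht, hmod, ← pow_eq_pow_mod _ ht, pow_one]
      rw [← hN, hz, sub_pow_char_pow_of_commute _ _ hc, e s hs, e s' hs's]
  have hzs : z * s = s * z := by rw [hz, sub_mul, mul_sub, hss', hs's]
  set d := z * z with hd
  have hds : d * s = s * d := by rw [hd, mul_assoc, hzs, ← mul_assoc, hzs, mul_assoc]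
  set e0 := d^N with he0
  have he0z : e0 = z^(2*N) := by rw [he0, hd, pow_mul, sq]
  have hze0 : z * e0 = z := by rw [he0z, ← pow_succ', hzN]
  have he0z' : e0 * z = z := by rw [he0z, ← pow_succ, hzN]
  have hid : e0 * e0 = e0 := by
    obtain ⟨g, hg⟩ : ∃ g, e0 = z * g := by
      refine ⟨z^(2*N-1), ?_⟩
      rw [he0z, ← pow_succ']; congr 1; omega
    calc e0 * e0 = e0 * (z * g) := by rw [← hg]
      _ = e0 := by rw [← mul_assoc, he0z', ← hg]
  have hes : e0 * s = s * e0 := (Commute.pow_left (show Commute d s from hds) N)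
  have hzB : ∀ x y, B (z x) y = - B x (z y) := by
    intro x y
    rw [hz]
    simp only [LinearMap.sub_apply, map_sub, adj, adj']
    ring
  have hdB : ∀ x y, B (d x) y = B x (d y) := by
    intro x y
    rw [hd, Module.End.mul_apply, hzB, hzB, neg_neg]; rfl
  have heB : ∀ x y, B (e0 x) y = B x (e0 y) := by
    rw [he0]
    have : ∀ k x y, B ((d^k) x) y = B x ((d^k) y) := by
      intro k
      induction k with
      | zero => intro x y; rfl
      | succ k ih =>
        intro x y
        rw [pow_succ]
        rw [Module.End.mul_apply, ih, hdB, ← Module.End.mul_apply, ← pow_succ', ← pow_succ]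
    exact this N
  -- Ψ and a
  obtain ⟨Ψ, hΨi, hΨr, hΨs⟩ := aux_semilin' p i m K V s hs hm
  have hΨsurj : Function.Surjective Ψ := Finite.surjective_of_injective hΨi
  let τ := (iterateFrobeniusEquiv K p i).symm
  have hτ : ∀ k, (τ k)^(p^i) = k := fun k => (iterateFrobeniusEquiv K p i).apply_symm_apply k
  have hτ' : ∀ k, τ (k^(p^i)) = k := fun k => (iterateFrobeniusEquiv K p i).symm_apply_apply k
  let B' : LinearMap.BilinForm K V := LinearMap.mk₂ K (fun x y => τ (B (Ψ x) (Ψ y)))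
    (by intro x y w; simp) (by intro r x y; simp [hΨr, hτ'])
    (by intro x y w; simp) (by intro r x y; simp [hΨr, hτ'])
  let a : Module.End K V := B'.symmCompOfNondegenerate B hBn
  have ha : ∀ x y, (B (a x) y)^(p^i) = B (Ψ x) (Ψ y) := by
    intro x y
    rw [LinearMap.BilinForm.symmCompOfNondegenerate_left_apply]
    exact hτ _
  have hpinj : ∀ k l : K, k^(p^i) = l^(p^i) → k = l := fun k l h => by
    rw [← hτ' k, h, hτ']
  have haB : ∀ x y, B (a x) y = B x (a y) := by
    intro x y
    apply hpinj
    rw [ha, hB x, ha, hB]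
  have hsq : ∀ k x y, B ((s^k) x) ((s^k) y) = B x y := by
    intro k
    induction k with
    | zero => intro x y; rfl
    | succ k ih =>
      intro x y
      rw [pow_succ, Module.End.mul_apply, Module.End.mul_apply, ih, hsB]
  have has : a * s = s * a := by
    ext x
    rw [← sub_eq_zero]
    apply hnd
    intro y
    rw [map_sub, LinearMap.sub_apply, sub_eq_zero]
    apply hpinj
    rw [Module.End.mul_apply, Module.End.mul_apply, ha, hΨs, adj, ha]
    conv_lhs => rw [← ss'a y, hΨs]
    exact hsq _ _ _
  have has' : a * s' = s' * a := by
    calc a * s' = s' * s * (a * s') := by rw [hs's, one_mul]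
      _ = s' * (a * s) * s' := by rw [has]; simp only [mul_assoc]
      _ = _ := by rw [mul_assoc, mul_assoc, hss', mul_one]
  have haz : a * z = z * a := by rw [hz, mul_sub, sub_mul, has, has']
  have had : a * d = d * a := by rw [hd, ← mul_assoc, haz, mul_assoc, haz, mul_assoc]
  have hau : IsUnit a := by
    rw [LinearMap.isUnit_iff_ker_eq_bot, LinearMap.ker_eq_bot']
    intro x hx
    have : Ψ x = 0 := by
      apply hnd
      intro y
      obtain ⟨y, rfl⟩ := hΨsurj y
      rw [← ha, hx]; simp [hp.out.ne_zero]
    exact hΨi (by rw [this, map_zero])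
  obtain ⟨x, y, hxB, hyB, hxs, hys, hxa, hya, hxd, hyd, hxy, hnorm⟩ :=
    aux_norm p hodd B s a d had hau has hds haB hdB N hN hid
  have hcs' : ∀ x, x * s = s * x → x * z = z * x := by
    intro x hx
    have hx' : x * s' = s' * x := by
      calc x * s' = s' * s * (x * s') := by rw [hs's, one_mul]
        _ = s' * (x * s) * s' := by rw [hx]; simp only [mul_assoc]
        _ = _ := by rw [mul_assoc, mul_assoc, hss', mul_one]
    rw [hz, mul_sub, sub_mul, hx, hx']
  have hxz := hcs' x hxs
  have hyz := hcs' y hys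
  set c := x + y * z with hcdef
  have hcs : c * s = s * c := by
    rw [hcdef, add_mul, mul_add, hxs, mul_assoc, hzs, ← mul_assoc, hys, mul_assoc]
  have hcd : c * z = z * c := hcs' c hcs
  have hcB : ∀ v w, B (c v) w = B v ((x - y * z) w) := by
    intro v w
    simp only [hcdef, LinearMap.add_apply, LinearMap.sub_apply, map_add, map_sub,
      Module.End.mul_apply, hxB, hyB, hzB]
    rw [← Module.End.mul_apply, ← hyz, Module.End.mul_apply]
    ring
  have hcc : (x - y * z) * c = x * x - d * (y * y) := by
    have e1 : x * (y * z) = y * z * x := by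
      rw [← mul_assoc, hxy, mul_assoc, hxz, mul_assoc]
    have e2 : y * z * (y * z) = d * (y * y) := by
      calc y * z * (y * z) = y * (z * y) * z := by simp only [mul_assoc]
        _ = y * y * d := by rw [← hyz, hd]; simp only [mul_assoc]
        _ = y * (d * y) := by rw [mul_assoc, hyd]
        _ = _ := by rw [← mul_assoc, hyd, mul_assoc]
    rw [hcdef, sub_mul, mul_add, mul_add, e1, e2]
    abel
  have hac : a * (x - y * z) = (x - y * z) * a := by
    rw [mul_sub, sub_mul, hxa, ← mul_assoc, ← hya, mul_assoc, haz, mul_assoc]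
  have hce : c * e0 = e0 * c := by
    rw [he0z]; exact (Commute.pow_right (show Commute c z from hcd) _)
  -- isometry on e0 part
  have iso0 : ∀ v w, B (Ψ (c (e0 v))) (Ψ (c (e0 w))) = (B (e0 v) (e0 w))^(p^i) := by
    intro v w
    rw [← ha, haB, hcB]
    congr 2
    simp only [← Module.End.mul_apply]
    congr 1
    calc (x - y * z) * (a * (c * e0)) = a * ((x - y * z) * c) * e0 := by
          rw [← mul_assoc, ← hac]; simp only [mul_assoc]
      _ = e0 := by rw [hcc, hnorm]
  -- eigenprojections
  have hker : (1 - e0) * (s * s) = 1 - e0 := by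
    have h1 : (1 - e0) * (z * s) = 0 := by
      rw [← mul_assoc, sub_mul 1 e0 z, he0z', one_mul, sub_self, zero_mul]
    have h2 : z * s = s * s - 1 := by rw [hz, sub_mul, hs's]
    rw [h2, mul_sub (1 - e0) (s * s) 1, mul_one, sub_eq_zero] at h1
    exact h1
  have hses : s * (1 - e0) = (1 - e0) * s := by rw [mul_sub, sub_mul, hes, mul_one, one_mul]
  set e1 := (2⁻¹ : K) • ((1 - e0) * (1 + s)) with he1
  set e2 := (2⁻¹ : K) • ((1 - e0) * (1 - s)) with he2
  have hsum : e0 + e1 + e2 = 1 := by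
    rw [he1, he2, add_assoc, ← smul_add, ← mul_add]
    have : (1 + s) + (1 - s) = (2:K) • (1 : Module.End K V) := by rw [two_smul]; abel
    rw [this, mul_smul_comm, smul_smul, inv_mul_cancel₀ h2, one_smul, mul_one]; abel
  have he1s : e1 * s = e1 := by
    rw [he1, smul_mul_assoc, mul_assoc, add_mul, one_mul, mul_add, hker, mul_add, mul_one, add_comm]
  have he2s : e2 * s = - e2 := by
    rw [he2, smul_mul_assoc, mul_assoc, sub_mul 1 s s, one_mul, mul_sub (1 - e0) s (s * s), hker,
      mul_sub (1 - e0) 1 s, mul_one, ← smul_neg,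
      neg_sub]
  have hse1 : s * e1 = e1 := by
    have : Commute s e1 := ((show Commute s (1 - e0) from hses).mul_right
      ((Commute.one_right s).add_right (Commute.refl s))).smul_right _
    rw [this.eq, he1s]
  have hse2 : s * e2 = - e2 := by
    have : Commute s e2 := ((show Commute s (1 - e0) from hses).mul_right
      ((Commute.one_right s).sub_right (Commute.refl s))).smul_right _
    rw [this.eq, he2s]
  have m1 : ∀ v, e1 v ∈ LinearMap.ker (s - (1:K) • 1) := by
    intro v
    rw [LinearMap.mem_ker, LinearMap.sub_apply, ← Module.End.mul_apply, hse1]; simp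
  have m2 : ∀ v, e2 v ∈ LinearMap.ker (s - (-1:K) • 1) := by
    intro v
    rw [LinearMap.mem_ker, LinearMap.sub_apply, ← Module.End.mul_apply, hse2]; simp
  have mk : ∀ (ε : K) v, v ∈ LinearMap.ker (s - ε • 1) → s v = ε • v := by
    intro ε v hv
    rw [LinearMap.mem_ker, LinearMap.sub_apply, sub_eq_zero] at hv
    exact hv
  obtain ⟨F1, r1, w1, c1, i1⟩ := aux_eig p i hodd K V B hB _ e1 m1
  obtain ⟨F2, r2, w2, c2, i2⟩ := aux_eig p i hodd K V B hB _ e2 m2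
  replace w1 := fun v => mk _ _ (w1 v)
  replace w2 := fun v => mk _ _ (w2 v)
  replace m1 := fun v => mk _ _ (m1 v)
  replace m2 := fun v => mk _ _ (m2 v)
  let F0 : V →+ V := Ψ.comp (c * e0).toAddMonoidHom
  have hF0 : ∀ v, F0 v = Ψ (c (e0 v)) := fun v => rfl
  have hΨs' : ∀ v, Ψ (s' v) = (s'^(p^i)) (Ψ v) := by
    intro v
    conv_rhs => rw [← ss'a v, hΨs, ← Module.End.mul_apply, ← hc.symm.mul_pow, hs's, one_pow]
    rfl
  obtain ⟨g, hg⟩ : ∃ g, e0 = z * g := by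
    refine ⟨z^(2*N-1), ?_⟩
    rw [he0z, ← pow_succ']; congr 1; omega
  have im0 : ∀ v, ∃ t, F0 v = (s^(p^i) - s'^(p^i)) t := by
    intro v
    refine ⟨Ψ (c (g v)), ?_⟩
    rw [hF0, hg, Module.End.mul_apply, ← Module.End.mul_apply c z, hcd, Module.End.mul_apply, hz,
      LinearMap.sub_apply, map_sub, hΨs, hΨs', LinearMap.sub_apply]
  have ie0 : ∀ v, ∃ t, e0 v = (s^1 - s'^1) t := by
    intro v
    exact ⟨g v, by rw [pow_one, pow_one, ← hz, hg]; rfl⟩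
  have comb : ∀ k (x0 x1 x2 y0 y1 y2 : V), (∃ t, x0 = (s^k - s'^k) t) → (∃ t, y0 = (s^k - s'^k) t) →
      s x1 = (1:K) • x1 → s y1 = (1:K) • y1 → s x2 = (-1:K) • x2 → s y2 = (-1:K) • y2 →
      B (x0 + x1 + x2) (y0 + y1 + y2) = B x0 y0 + B x1 y1 + B x2 y2 := by
    rintro k x0 x1 x2 y0 y1 y2 ⟨t, rfl⟩ ⟨t', rfl⟩ hx1 hy1 hx2 hy2
    simp only [map_add, LinearMap.add_apply]
    rw [orth 1 y1 (by ring) hy1, orth (-1) y2 (by ring) hy2, orth' 1 x1 (by ring) hx1,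
      orth' (-1) x2 (by ring) hx2, orth12 x1 y2 hx1 hy2, hB x2 y1, orth12 y1 x2 hy1 hx2]
    ring
  refine ⟨F0 + F1 + F2, ?_, ?_, ?_⟩
  · intro r v
    simp only [AddMonoidHom.add_apply, r1, r2, hF0, map_smul, hΨr, smul_add]
  · intro v
    have t0 : F0 (s v) = (s^(p^i)) (F0 v) := by
      rw [hF0, hF0, ← hΨs]
      congr 1
      simp only [← Module.End.mul_apply]
      rw [hes, ← mul_assoc, hcs, mul_assoc]
    have t1 : F1 (s v) = (s^(p^i)) (F1 v) := by
      rw [eigk 1 _ (w1 v), one_pow, one_smul]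
      apply c1
      rw [← Module.End.mul_apply, he1s]
    have t2 : F2 (s v) = (s^(p^i)) (F2 v) := by
      rw [eigk (-1) _ (w2 v), hodd.pow.neg_one_pow, neg_one_smul, ← map_neg]
      apply c2
      rw [← Module.End.mul_apply, he2s]
      simp
    simp only [AddMonoidHom.add_apply, t0, t1, t2, map_add]
  · intro v w
    simp only [AddMonoidHom.add_apply]
    rw [comb (p^i) _ _ _ _ _ _ (im0 v) (im0 w) (w1 v) (w1 w) (w2 v) (w2 w), i1, i2, hF0, hF0, iso0,
      ← add_pow_char_pow, ← add_pow_char_pow,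
      ← comb 1 _ _ _ _ _ _ (ie0 v) (ie0 w) (m1 v) (m1 w) (m2 v) (m2 w)]
    have : ∀ v, e0 v + e1 v + e2 v = v := fun v => by
      rw [← LinearMap.add_apply, ← LinearMap.add_apply, hsum]; rfl
    rw [this, this]

end Aux

open Matrix

/-- Let `p` be an odd prime, `K` a finite field of characteristic `p`,
`n ≥ 1`, and `M` the antidiagonal Gram matrix of size `2n+1`.  If `s ∈ SO(M)` is
semisimple (its order is coprime to `p`) and `i` is a natural number, then the cyclic
subgroups generated by `s` and by its Frobenius twist `σ(s)` (entrywise `x ↦ x^(p^i)`)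
are conjugate in `SO(M)`. -/
theorem stmt_1 (p : ℕ) (hp : p.Prime) (hodd : Odd p)
    (K : Type) [Field K] [Fintype K] [CharP K p]
    (n : ℕ) (hn : 1 ≤ n)
    (M : Matrix (Fin (2 * n + 1)) (Fin (2 * n + 1)) K)
    (hM : ∀ i j : Fin (2 * n + 1), M i j = if (i : ℕ) + (j : ℕ) = 2 * n then 1 else 0)
    (s : Matrix (Fin (2 * n + 1)) (Fin (2 * n + 1)) K)
    (hs1 : sᵀ * M * s = M) (hs2 : s.det = 1)
    (hss : Nat.Coprime (orderOf s) p) (i : ℕ) :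
    ∃ h : Matrix (Fin (2 * n + 1)) (Fin (2 * n + 1)) K,
      hᵀ * M * h = M ∧ h.det = 1 ∧
      (Set.range fun k : ℕ => h⁻¹ * s ^ k * h) =
        Set.range fun k : ℕ => (s.map fun x => x ^ p ^ i) ^ k := by
  classical
  have : Fact p.Prime := ⟨hp⟩
  have hMsymm : ∀ i j, M i j = M j i := by
    intro i j; rw [hM, hM, add_comm]
  have hM' : ∀ i j : Fin (2 * n + 1), M i j = if j = Fin.rev i then 1 else 0 := by
    intro i j
    rw [hM]
    congr 1
    rw [Fin.ext_iff, Fin.val_rev]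
    apply propext
    omega
  have hMM : M * M = 1 := by
    ext i j
    rw [Matrix.mul_apply, Finset.sum_eq_single (Fin.rev i)]
    · rw [hM', hM', Matrix.one_apply, Fin.rev_rev]
      simp [eq_comm]
    · intro k _ hk
      rw [hM' i k, if_neg hk, zero_mul]
    · simp
  have hMdet : M.det * M.det = 1 := by rw [← Matrix.det_mul, hMM, Matrix.det_one]
  have hMdet0 : M.det ≠ 0 := fun h => by rw [h] at hMdet; simp at hMdet
  let B : LinearMap.BilinForm K (Fin (2 * n + 1) → K) := Matrix.toBilin' M
  have hBa : ∀ x y, B x y = x ⬝ᵥ M *ᵥ y := fun x y => Matrix.toBilin'_apply' M x y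
  have hMt : Mᵀ = M := by ext i j; exact hMsymm j i
  have hB : ∀ x y, B x y = B y x := by
    intro x y
    rw [hBa, hBa, Matrix.dotProduct_mulVec, ← Matrix.mulVec_transpose, hMt, dotProduct_comm]
  have hBn : B.Nondegenerate :=
    LinearMap.BilinForm.nondegenerate_toBilin'_of_det_ne_zero' M hMdet0
  let S : Module.End K (Fin (2 * n + 1) → K) := Matrix.toLin' s
  have hSp : ∀ k v, (S ^ k) v = (s ^ k) *ᵥ v := by
    intro k v
    rw [← Matrix.toLin'_pow, Matrix.toLin'_apply]
  have hSB : ∀ x y, B (S x) (S y) = B x y := by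
    intro x y
    rw [hBa, hBa, Matrix.toLin'_apply, Matrix.toLin'_apply, Matrix.mulVec_mulVec,
      Matrix.dotProduct_mulVec, Matrix.dotProduct_mulVec, ← Matrix.vecMul_transpose,
      Matrix.vecMul_vecMul, ← mul_assoc, hs1]
  have hSm : S ^ (orderOf s) = 1 := by
    ext1 v
    ext1
    simp only [LinearMap.comp_apply]
    rw [hSp, pow_orderOf_eq_one, Matrix.one_mulVec]; rfl
  obtain ⟨Φ, hr, hΦs, hiso⟩ := main_abs p i (orderOf s) hodd K (Fin (2 * n + 1) → K) B hB hBn S hSB hSm hss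
  let h : Matrix (Fin (2 * n + 1)) (Fin (2 * n + 1)) K := Matrix.of fun a b => Φ (Pi.single b 1) a
  have hcol : ∀ b, h *ᵥ Pi.single b 1 = Φ (Pi.single b 1) := by
    intro b
    rw [Matrix.mulVec_single_one]; rfl
  have hΦ : ∀ v, Φ v = h *ᵥ (fun a => v a ^ p ^ i) := by
    intro v
    conv_lhs => rw [pi_eq_sum_univ' v, map_sum]
    conv_rhs => rw [pi_eq_sum_univ' (fun a => v a ^ p ^ i), Matrix.mulVec_sum]
    apply Finset.sum_congr rfl
    intro b _
    have e : (fun j => if b = j then (1:K) else 0) = Pi.single b 1 := by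
      ext j; simp [Pi.single_apply, eq_comm]
    rw [hr, Matrix.mulVec_smul]
    first
    | rw [e, hcol]
    | rw [hcol]
  have hconj : h * (s.map fun x => x ^ p ^ i) = s ^ p ^ i * h := by
    apply Matrix.ext_of_mulVec_single
    intro b
    rw [← Matrix.mulVec_mulVec, ← Matrix.mulVec_mulVec, hcol, ← hSp, ← hΦs, hΦ]
    congr 1
    ext a
    simp [S]
  have hform : hᵀ * M * h = M := by
    ext a b
    have h1 := hiso (Pi.single a 1) (Pi.single b 1)
    have h2 : B (Pi.single a 1) (Pi.single b 1) = M a b := by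
      rw [hBa]; simp
    have h3 : (M a b) ^ p ^ i = M a b := by
      rw [hM]; split_ifs <;> simp [hp.ne_zero]
    rw [h2, h3, hBa, ← hcol, ← hcol] at h1
    rw [← h1, Matrix.mulVec_mulVec, Matrix.dotProduct_mulVec, ← Matrix.vecMul_transpose,
      Matrix.vecMul_vecMul, ← mul_assoc]
    simp
  have hdet : h.det = 1 ∨ h.det = -1 := by
    have := congrArg Matrix.det hform
    rw [Matrix.det_mul, Matrix.det_mul, Matrix.det_transpose] at this
    apply mul_self_eq_one_iff.1
    apply mul_right_cancel₀ hMdet0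
    linear_combination this
  obtain ⟨g, g1, g2, g3⟩ : ∃ g : Matrix (Fin (2 * n + 1)) (Fin (2 * n + 1)) K,
      gᵀ * M * g = M ∧ g.det = 1 ∧ g * (s.map fun x => x ^ p ^ i) = s ^ p ^ i * g := by
    rcases hdet with hd | hd
    · exact ⟨h, hform, hd, hconj⟩
    · refine ⟨-h, ?_, ?_, ?_⟩
      · simpa using hform
      · rw [Matrix.det_neg, hd, Fintype.card_fin, (odd_two_mul_add_one n).neg_one_pow]; ring
      · rw [neg_mul, mul_neg, hconj]
  have gu : IsUnit g.det := by rw [g2]; exact isUnit_one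
  have gi : g⁻¹ * g = 1 := Matrix.nonsing_inv_mul g gu
  have gp : ∀ k, g * (s.map fun x => x ^ p ^ i) ^ k = (s ^ p ^ i) ^ k * g := fun k =>
    (SemiconjBy.pow_right (show SemiconjBy g _ _ from g3) k).eq
  have key : ∀ k, g⁻¹ * (s ^ p ^ i) ^ k * g = (s.map fun x => x ^ p ^ i) ^ k := by
    intro k
    rw [mul_assoc, ← gp, ← mul_assoc, gi, one_mul]
  refine ⟨g, g1, g2, ?_⟩
  ext A
  constructor
  · rintro ⟨k, rfl⟩
    have hcop : Nat.Coprime (orderOf s) (p ^ i) := Nat.Coprime.pow_right i hss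
    obtain ⟨m, hm⟩ := exists_pow_eq_self_of_coprime hcop.symm
    refine ⟨m * k, ?_⟩
    change (s.map fun x => x ^ p ^ i) ^ (m * k) = g⁻¹ * s ^ k * g
    rw [← key, pow_mul, hm]
  · rintro ⟨k, rfl⟩
    refine ⟨p ^ i * k, ?_⟩
    change g⁻¹ * s ^ (p ^ i * k) * g = (s.map fun x => x ^ p ^ i) ^ k
    rw [pow_mul, key]
end

section
/- Assume ℓ is an odd prime and γ ≥ 1. Let E be the subgroup of the unit group of the matrix ring Matrix ι ι F generated by the clock matrices X_j and shift matrices Y_j for all j : Fin γ. Then: (1) E has cardinality ℓ^(2γ+1); (2) g^ℓ = 1 for every g ∈ E; (3) the center of E equals the commutator subgroup of E, equals the cyclic subgroup generated by the scalar matrix ζ • 1, and has cardinality ℓ. (Thus E is a faithful matrix realization of the extraspecial group E_γ of order ℓ^(2γ+1) and exponent ℓ used in the construction of basic subgroups.) -/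
open Matrix

/-- The clock matrix `X⁰_j`. -/
def clockMatrix (ℓ γ : ℕ) (F : Type) [Field F] (ζ : F) (j : Fin γ) :
    Matrix (Fin γ → Fin ℓ) (Fin γ → Fin ℓ) F :=
  Matrix.diagonal fun f => ζ ^ (f j : ℕ)

/-- The shift matrix `Y⁰_j`. -/
def shiftMatrix (ℓ γ : ℕ) [NeZero ℓ] (F : Type) [Field F] (j : Fin γ) :
    Matrix (Fin γ → Fin ℓ) (Fin γ → Fin ℓ) F :=
  fun f g => if f = Function.update g j (g j + 1) then 1 else 0

/-- The subgroup of the unit group of the matrix ring generated by the clock and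
shift matrices. -/
def extraspecialSubgroup (ℓ γ : ℕ) [NeZero ℓ] (F : Type) [Field F] (ζ : F) :
    Subgroup (Matrix (Fin γ → Fin ℓ) (Fin γ → Fin ℓ) F)ˣ :=
  Subgroup.closure {u | (∃ j, (u : Matrix (Fin γ → Fin ℓ) (Fin γ → Fin ℓ) F)
      = clockMatrix ℓ γ F ζ j) ∨
    ∃ j, (u : Matrix (Fin γ → Fin ℓ) (Fin γ → Fin ℓ) F) = shiftMatrix ℓ γ F j}

section ExHelpers

open scoped Fin.CommRing commutatorElement

/-- character -/
def exChi (ℓ : ℕ) (F : Type) [Field F] (ζ : F) (x : Fin ℓ) : F := ζ ^ (x : ℕ)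

theorem exChi_add (ℓ : ℕ) [NeZero ℓ] (F : Type) [Field F] (ζ : F) (h : ζ ^ ℓ = 1) (x y : Fin ℓ) :
    exChi ℓ F ζ (x + y) = exChi ℓ F ζ x * exChi ℓ F ζ y := by
  unfold exChi
  rw [Fin.val_add, ← pow_add, ← pow_eq_pow_mod _ h]

/-- the general element -/
def exM (ℓ γ : ℕ) [NeZero ℓ] (F : Type) [Field F] (ζ : F) (c : Fin ℓ) (a b : Fin γ → Fin ℓ) :
    Matrix (Fin γ → Fin ℓ) (Fin γ → Fin ℓ) F :=
  fun f g => if f = g + b then exChi ℓ F ζ (c + a ⬝ᵥ f) else 0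

theorem exM_mul (ℓ γ : ℕ) [NeZero ℓ] (F : Type) [Field F] (ζ : F) (h : ζ ^ ℓ = 1)
    (c c' : Fin ℓ) (a b a' b' : Fin γ → Fin ℓ) :
    exM ℓ γ F ζ c a b * exM ℓ γ F ζ c' a' b' =
      exM ℓ γ F ζ (c + c' - a' ⬝ᵥ b) (a + a') (b + b') := by
  ext f g
  rw [Matrix.mul_apply, Finset.sum_eq_single (f - b)]
  · unfold exM
    have e : (f - b = g + b') ↔ f = g + (b + b') := by
      rw [sub_eq_iff_eq_add, add_assoc, add_comm b']
    simp only [sub_add_cancel, if_true, e]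
    split_ifs with hh
    · rw [← exChi_add _ _ _ h]
      congr 1
      rw [add_dotProduct, dotProduct_sub]
      ring
    · simp
  · intro k _ hk
    unfold exM
    rw [if_neg, zero_mul]
    rintro rfl
    exact hk (by simp)
  · simp

theorem exM_one (ℓ γ : ℕ) [NeZero ℓ] (F : Type) [Field F] (ζ : F) :
    exM ℓ γ F ζ 0 0 0 = 1 := by
  ext f g
  simp [exM, Matrix.one_apply, exChi]

/-- the general element as a unit -/
def exU (ℓ γ : ℕ) [NeZero ℓ] (F : Type) [Field F] (ζ : F) (h : ζ ^ ℓ = 1)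
    (c : Fin ℓ) (a b : Fin γ → Fin ℓ) : (Matrix (Fin γ → Fin ℓ) (Fin γ → Fin ℓ) F)ˣ where
  val := exM ℓ γ F ζ c a b
  inv := exM ℓ γ F ζ (-c - a ⬝ᵥ b) (-a) (-b)
  val_inv := by
    rw [exM_mul _ _ _ _ h, ← exM_one ℓ γ F ζ]
    congr 1 <;> simp <;> abel
  inv_val := by
    rw [exM_mul _ _ _ _ h, ← exM_one ℓ γ F ζ]
    congr 1 <;> simp <;> abel

theorem exU_mul (ℓ γ : ℕ) [NeZero ℓ] (F : Type) [Field F] (ζ : F) (h : ζ ^ ℓ = 1)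
    (c c' : Fin ℓ) (a b a' b' : Fin γ → Fin ℓ) :
    exU ℓ γ F ζ h c a b * exU ℓ γ F ζ h c' a' b' =
      exU ℓ γ F ζ h (c + c' - a' ⬝ᵥ b) (a + a') (b + b') :=
  Units.ext (exM_mul ℓ γ F ζ h c c' a b a' b')

theorem exU_one (ℓ γ : ℕ) [NeZero ℓ] (F : Type) [Field F] (ζ : F) (h : ζ ^ ℓ = 1) :
    exU ℓ γ F ζ h 0 0 0 = 1 :=
  Units.ext (exM_one ℓ γ F ζ)

theorem exU_inv (ℓ γ : ℕ) [NeZero ℓ] (F : Type) [Field F] (ζ : F) (h : ζ ^ ℓ = 1)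
    (c : Fin ℓ) (a b : Fin γ → Fin ℓ) :
    (exU ℓ γ F ζ h c a b)⁻¹ = exU ℓ γ F ζ h (-c - a ⬝ᵥ b) (-a) (-b) :=
  Units.ext rfl

theorem exU_pow (ℓ γ : ℕ) [NeZero ℓ] (F : Type) [Field F] (ζ : F) (h : ζ ^ ℓ = 1)
    (c : Fin ℓ) (a b : Fin γ → Fin ℓ) (n : ℕ) :
    exU ℓ γ F ζ h c a b ^ n = exU ℓ γ F ζ h (n • c - (n.choose 2) • (a ⬝ᵥ b)) (n • a) (n • b) := by
  induction n with
  | zero => simp [exU_one]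
  | succ n ih =>
    rw [pow_succ, ih, exU_mul]
    congr 1
    · rw [dotProduct_smul, Nat.choose_succ_succ' n 1, Nat.choose_one_right, add_smul, add_smul,
        one_smul]
      abel
    all_goals rw [succ_nsmul]

theorem ex_nsmul (ℓ : ℕ) [NeZero ℓ] (x : Fin ℓ) : ℓ • x = 0 := by
  have := card_nsmul_eq_zero' (x := x)
  simpa using this

theorem exChi_inj (ℓ : ℕ) (hℓ : ℓ.Prime) (F : Type) [Field F] (ζ : F) (h : ζ ^ ℓ = 1)
    (hζ : ζ ≠ 1) {x y : Fin ℓ} (e : exChi ℓ F ζ x = exChi ℓ F ζ y) : x = y := by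
  haveI := Fact.mk hℓ
  have ho : orderOf ζ = ℓ := orderOf_eq_prime h hζ
  unfold exChi at e
  have := pow_injOn_Iio_orderOf (x := ζ) (by simp [ho]) (by simp [ho]) e
  exact Fin.ext this

theorem exU_inj (ℓ : ℕ) (hℓ : ℓ.Prime) [NeZero ℓ] (γ : ℕ) (F : Type) [Field F] (ζ : F)
    (h : ζ ^ ℓ = 1) (hζ : ζ ≠ 1) {c c' : Fin ℓ} {a b a' b' : Fin γ → Fin ℓ}
    (e : exU ℓ γ F ζ h c a b = exU ℓ γ F ζ h c' a' b') : c = c' ∧ a = a' ∧ b = b' := by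
  have e1 : exM ℓ γ F ζ c a b = exM ℓ γ F ζ c' a' b' := congrArg Units.val e
  have hz : ζ ≠ 0 := by
    rintro rfl
    simp [hℓ.ne_zero] at h
  have hb : b = b' := by
    by_contra hb
    have := congrFun (congrFun e1 b) 0
    simp [exM, hb, exChi, hz] at this
  subst hb
  have key : ∀ f, c + a ⬝ᵥ f = c' + a' ⬝ᵥ f := by
    intro f
    have := congrFun (congrFun e1 f) (f - b)
    simp only [exM, sub_add_cancel, if_true] at this
    exact exChi_inj ℓ hℓ F ζ h hζ this
  have hc : c = c' := by simpa using key 0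
  subst hc
  refine ⟨rfl, ?_, rfl⟩
  ext1 j
  simpa using key (Pi.single j 1)

theorem exU_clock (ℓ : ℕ) (hℓ : ℓ.Prime) [NeZero ℓ] (γ : ℕ) (F : Type) [Field F] (ζ : F)
    (h : ζ ^ ℓ = 1) (j : Fin γ) :
    (exU ℓ γ F ζ h 0 (Pi.single j 1) 0 : Matrix _ _ F) = clockMatrix ℓ γ F ζ j := by
  ext f g
  simp only [exU, exM, clockMatrix, Matrix.diagonal_apply, exChi]
  simp

theorem exU_shift (ℓ : ℕ) (hℓ : ℓ.Prime) [NeZero ℓ] (γ : ℕ) (F : Type) [Field F] (ζ : F)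
    (h : ζ ^ ℓ = 1) (j : Fin γ) :
    (exU ℓ γ F ζ h 0 0 (Pi.single j 1) : Matrix _ _ F) = shiftMatrix ℓ γ F j := by
  ext f g
  have : g + Pi.single j 1 = Function.update g j (g j + 1) := by
    ext1 i
    by_cases hi : i = j
    · subst hi; simp
    · simp [hi]
  simp only [exU, exM, shiftMatrix, exChi, this]
  simp

theorem exU_scalar (ℓ : ℕ) (hℓ : ℓ.Prime) [NeZero ℓ] (γ : ℕ) (F : Type) [Field F] (ζ : F)
    (h : ζ ^ ℓ = 1) :
    (exU ℓ γ F ζ h 1 0 0 : Matrix _ _ F) = ζ • (1 : Matrix (Fin γ → Fin ℓ) (Fin γ → Fin ℓ) F) := by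
  ext f g
  simp [exU, exM, exChi, Matrix.one_apply, Nat.mod_eq_of_lt hℓ.one_lt]

theorem exU_comm (ℓ γ : ℕ) [NeZero ℓ] (F : Type) [Field F] (ζ : F) (h : ζ ^ ℓ = 1)
    (c c' : Fin ℓ) (a b a' b' : Fin γ → Fin ℓ) :
    ⁅exU ℓ γ F ζ h c a b, exU ℓ γ F ζ h c' a' b'⁆ =
      exU ℓ γ F ζ h (a ⬝ᵥ b' - a' ⬝ᵥ b) 0 0 := by
  rw [commutatorElement_def, mul_inv_eq_iff_eq_mul, mul_inv_eq_iff_eq_mul, exU_mul, exU_mul, exU_mul]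
  congr 1
  · simp; ring
  · simp; abel
  · simp; abel

/-- the range as a subgroup -/
def exH (ℓ γ : ℕ) [NeZero ℓ] (F : Type) [Field F] (ζ : F) (h : ζ ^ ℓ = 1) :
    Subgroup (Matrix (Fin γ → Fin ℓ) (Fin γ → Fin ℓ) F)ˣ where
  carrier := {u | ∃ c a b, u = exU ℓ γ F ζ h c a b}
  mul_mem' := by
    rintro _ _ ⟨c, a, b, rfl⟩ ⟨c', a', b', rfl⟩
    exact ⟨_, _, _, exU_mul ..⟩
  one_mem' := ⟨0, 0, 0, (exU_one ..).symm⟩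
  inv_mem' := by
    rintro _ ⟨c, a, b, rfl⟩
    exact ⟨_, _, _, exU_inv ..⟩

/-- the scalars as a subgroup -/
def exZ (ℓ γ : ℕ) [NeZero ℓ] (F : Type) [Field F] (ζ : F) (h : ζ ^ ℓ = 1) :
    Subgroup (Matrix (Fin γ → Fin ℓ) (Fin γ → Fin ℓ) F)ˣ where
  carrier := {u | ∃ c, u = exU ℓ γ F ζ h c 0 0}
  mul_mem' := by
    rintro _ _ ⟨c, rfl⟩ ⟨c', rfl⟩
    exact ⟨c + c', by rw [exU_mul]; simp⟩
  one_mem' := ⟨0, (exU_one ..).symm⟩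
  inv_mem' := by
    rintro _ ⟨c, rfl⟩
    exact ⟨-c, by rw [exU_inv]; simp⟩

theorem exU_scalar_pow (ℓ γ : ℕ) [NeZero ℓ] (F : Type) [Field F] (ζ : F) (h : ζ ^ ℓ = 1)
    (c : Fin ℓ) : exU ℓ γ F ζ h c 0 0 = exU ℓ γ F ζ h 1 0 0 ^ (c : ℕ) := by
  rw [exU_pow]
  simp

theorem exZ_eq (ℓ : ℕ) (hℓ : ℓ.Prime) [NeZero ℓ] (γ : ℕ) (F : Type) [Field F] (ζ : F)
    (h : ζ ^ ℓ = 1) :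
    Subgroup.closure {u : (Matrix (Fin γ → Fin ℓ) (Fin γ → Fin ℓ) F)ˣ |
      (u : Matrix (Fin γ → Fin ℓ) (Fin γ → Fin ℓ) F)
          = ζ • (1 : Matrix (Fin γ → Fin ℓ) (Fin γ → Fin ℓ) F)} = exZ ℓ γ F ζ h := by
  apply le_antisymm
  · rw [Subgroup.closure_le]
    intro u hu
    exact ⟨1, Units.ext (hu.trans (exU_scalar ℓ hℓ γ F ζ h).symm)⟩
  · rintro _ ⟨c, rfl⟩
    rw [exU_scalar_pow]
    refine Subgroup.pow_mem _ (Subgroup.subset_closure ?_) _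
    exact exU_scalar ℓ hℓ γ F ζ h

theorem exH_eq (ℓ : ℕ) (hℓ : ℓ.Prime) [NeZero ℓ] (γ : ℕ) (hγ : 1 ≤ γ) (F : Type) [Field F] (ζ : F)
    (h : ζ ^ ℓ = 1) : extraspecialSubgroup ℓ γ F ζ = exH ℓ γ F ζ h := by
  apply le_antisymm
  · unfold extraspecialSubgroup
    rw [Subgroup.closure_le]
    rintro u (⟨j, hu⟩ | ⟨j, hu⟩)
    · exact ⟨_, _, _, Units.ext (hu.trans (exU_clock ℓ hℓ γ F ζ h j).symm)⟩
    · exact ⟨_, _, _, Units.ext (hu.trans (exU_shift ℓ hℓ γ F ζ h j).symm)⟩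
  · have hX : ∀ j, exU ℓ γ F ζ h 0 (Pi.single j 1) 0 ∈ extraspecialSubgroup ℓ γ F ζ := fun j =>
      Subgroup.subset_closure (Or.inl ⟨j, exU_clock ℓ hℓ γ F ζ h j⟩)
    have hY : ∀ j, exU ℓ γ F ζ h 0 0 (Pi.single j 1) ∈ extraspecialSubgroup ℓ γ F ζ := fun j =>
      Subgroup.subset_closure (Or.inr ⟨j, exU_shift ℓ hℓ γ F ζ h j⟩)
    have hdec : ∀ a : Fin γ → Fin ℓ, a = ∑ j, (a j : ℕ) • Pi.single j (1 : Fin ℓ) := by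
      intro a
      ext1 i
      simp [Finset.sum_apply, Pi.single_apply]
    let A : AddSubmonoid (Fin γ → Fin ℓ) :=
      { carrier := {a | exU ℓ γ F ζ h 0 a 0 ∈ extraspecialSubgroup ℓ γ F ζ}
        add_mem' := by
          intro a b ha hb
          have := (extraspecialSubgroup ℓ γ F ζ).mul_mem ha hb
          rw [exU_mul] at this
          simpa using this
        zero_mem' := by
          change exU ℓ γ F ζ h 0 0 0 ∈ extraspecialSubgroup ℓ γ F ζ
          rw [exU_one]; exact one_mem _ }
    let B : AddSubmonoid (Fin γ → Fin ℓ) :=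
      { carrier := {a | exU ℓ γ F ζ h 0 0 a ∈ extraspecialSubgroup ℓ γ F ζ}
        add_mem' := by
          intro a b ha hb
          have := (extraspecialSubgroup ℓ γ F ζ).mul_mem ha hb
          rw [exU_mul] at this
          simpa using this
        zero_mem' := by
          change exU ℓ γ F ζ h 0 0 0 ∈ extraspecialSubgroup ℓ γ F ζ
          rw [exU_one]; exact one_mem _ }
    have hA : ∀ a, exU ℓ γ F ζ h 0 a 0 ∈ extraspecialSubgroup ℓ γ F ζ := by
      intro a
      change a ∈ A
      rw [hdec a]
      exact sum_mem fun j _ => A.nsmul_mem (hX j) _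
    have hB : ∀ a, exU ℓ γ F ζ h 0 0 a ∈ extraspecialSubgroup ℓ γ F ζ := by
      intro a
      change a ∈ B
      rw [hdec a]
      exact sum_mem fun j _ => B.nsmul_mem (hY j) _
    have hC : ∀ c, exU ℓ γ F ζ h c 0 0 ∈ extraspecialSubgroup ℓ γ F ζ := by
      intro c
      have e := exU_comm ℓ γ F ζ h 0 0 (Pi.single ⟨0, hγ⟩ c) 0 0 (Pi.single ⟨0, hγ⟩ 1)
      simp only [single_dotProduct, Pi.single_eq_same, mul_one, zero_dotProduct, sub_zero] at e
      rw [← e, commutatorElement_def]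
      exact mul_mem (mul_mem (mul_mem (hA _) (hB _)) (inv_mem (hA _))) (inv_mem (hB _))
    rintro _ ⟨c, a, b, rfl⟩
    have := mul_mem (mul_mem (hC c) (hA a)) (hB b)
    rw [exU_mul, exU_mul] at this
    simpa using this

theorem ex_comm_eq (ℓ : ℕ) [NeZero ℓ] (γ : ℕ) (hγ : 1 ≤ γ) (F : Type) [Field F]
    (ζ : F) (h : ζ ^ ℓ = 1) :
    (commutator ↥(exH ℓ γ F ζ h)).map (exH ℓ γ F ζ h).subtype = exZ ℓ γ F ζ h := by
  rw [commutator_def, Subgroup.map_commutator, ← MonoidHom.range_eq_map, Subgroup.range_subtype]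
  apply le_antisymm
  · rw [Subgroup.commutator_le]
    rintro _ ⟨c, a, b, rfl⟩ _ ⟨c', a', b', rfl⟩
    exact ⟨_, exU_comm ..⟩
  · rintro _ ⟨c, rfl⟩
    have e := exU_comm ℓ γ F ζ h 0 0 (Pi.single ⟨0, hγ⟩ c) 0 0 (Pi.single ⟨0, hγ⟩ 1)
    simp only [single_dotProduct, Pi.single_eq_same, mul_one, zero_dotProduct, sub_zero] at e
    rw [← e]
    exact Subgroup.commutator_mem_commutator ⟨_, _, _, rfl⟩ ⟨_, _, _, rfl⟩

theorem ex_center_eq (ℓ : ℕ) (hℓ : ℓ.Prime) [NeZero ℓ] (γ : ℕ) (F : Type) [Field F]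
    (ζ : F) (h : ζ ^ ℓ = 1) (hζ : ζ ≠ 1) :
    (Subgroup.center ↥(exH ℓ γ F ζ h)).map (exH ℓ γ F ζ h).subtype = exZ ℓ γ F ζ h := by
  ext u
  constructor
  · rintro ⟨⟨_, c, a, b, rfl⟩, hu, rfl⟩
    have key : ∀ a' b', a ⬝ᵥ b' - a' ⬝ᵥ b = 0 := by
      intro a' b'
      have h1 := Subgroup.mem_center_iff.1 hu ⟨exU ℓ γ F ζ h 0 a' b', 0, a', b', rfl⟩
      have h2 := congrArg Subtype.val h1
      have e := exU_comm ℓ γ F ζ h c 0 a b a' b'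
      rw [commutatorElement_eq_one_iff_mul_comm.2 h2.symm, ← exU_one ℓ γ F ζ h] at e
      exact (exU_inj ℓ hℓ γ F ζ h hζ e).1.symm
    have ha : a = 0 := by
      ext1 j
      simpa using key 0 (Pi.single j 1)
    have hb : b = 0 := by
      ext1 j
      simpa using key (Pi.single j 1) 0
    subst ha hb
    exact ⟨c, rfl⟩
  · rintro ⟨c, rfl⟩
    refine ⟨⟨_, c, 0, 0, rfl⟩, ?_, rfl⟩
    rw [SetLike.mem_coe, Subgroup.mem_center_iff]
    rintro ⟨_, c', a', b', rfl⟩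
    apply Subtype.ext
    change exU ℓ γ F ζ h c' a' b' * exU ℓ γ F ζ h c 0 0 = exU ℓ γ F ζ h c 0 0 * exU ℓ γ F ζ h c' a' b'
    rw [exU_mul, exU_mul]
    congr 1
    · simp [add_comm]
    · simp
    · simp

end ExHelpers

/-- For `ℓ` an odd prime, `γ ≥ 1` and `ζ` of order `ℓ`, the subgroup
`E` generated by the clock and shift matrices has order `ℓ^(2γ+1)`, exponent `ℓ`, and
its center equals its commutator subgroup, equals the cyclic subgroup generated by the
scalar matrix `ζ • 1`, and has order `ℓ` — i.e. `E` is extraspecial of order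
`ℓ^(2γ+1)` and exponent `ℓ`. -/
theorem stmt_5 (ℓ : ℕ) (hℓ : ℓ.Prime) (hodd : Odd ℓ) [NeZero ℓ]
    (F : Type) [Field F] (ζ : F) (hζ1 : ζ ^ ℓ = 1) (hζ : ζ ≠ 1)
    (γ : ℕ) (hγ : 1 ≤ γ) :
    Nat.card (extraspecialSubgroup ℓ γ F ζ) = ℓ ^ (2 * γ + 1) ∧
    (∀ g ∈ extraspecialSubgroup ℓ γ F ζ, g ^ ℓ = 1) ∧
    (Subgroup.center ↥(extraspecialSubgroup ℓ γ F ζ)).map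
        (extraspecialSubgroup ℓ γ F ζ).subtype
      = (commutator ↥(extraspecialSubgroup ℓ γ F ζ)).map
        (extraspecialSubgroup ℓ γ F ζ).subtype ∧
    (Subgroup.center ↥(extraspecialSubgroup ℓ γ F ζ)).map
        (extraspecialSubgroup ℓ γ F ζ).subtype
      = Subgroup.closure {u : (Matrix (Fin γ → Fin ℓ) (Fin γ → Fin ℓ) F)ˣ | (u : Matrix (Fin γ → Fin ℓ) (Fin γ → Fin ℓ) F)
          = ζ • (1 : Matrix (Fin γ → Fin ℓ) (Fin γ → Fin ℓ) F)} ∧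
    Nat.card (Subgroup.center ↥(extraspecialSubgroup ℓ γ F ζ)) = ℓ := by
  rw [exH_eq ℓ hℓ γ hγ F ζ hζ1, exZ_eq ℓ hℓ γ F ζ hζ1, ex_comm_eq ℓ γ hγ F ζ hζ1,
    ex_center_eq ℓ hℓ γ F ζ hζ1 hζ]
  refine ⟨?_, ?_, rfl, rfl, ?_⟩
  · let φ : Fin ℓ × (Fin γ → Fin ℓ) × (Fin γ → Fin ℓ) → exH ℓ γ F ζ hζ1 :=
      fun p => ⟨exU ℓ γ F ζ hζ1 p.1 p.2.1 p.2.2, _, _, _, rfl⟩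
    have hφ : Function.Bijective φ := by
      constructor
      · rintro ⟨c, a, b⟩ ⟨c', a', b'⟩ e
        obtain ⟨h1, h2, h3⟩ := exU_inj ℓ hℓ γ F ζ hζ1 hζ (congrArg Subtype.val e)
        simp_all
      · rintro ⟨_, c, a, b, rfl⟩
        exact ⟨(c, a, b), rfl⟩
    rw [← Nat.card_eq_of_bijective φ hφ]
    simp
    ring
  · rintro _ ⟨c, a, b, rfl⟩
    rw [exU_pow, ← exU_one ℓ γ F ζ hζ1]
    have h2 : ℓ ∣ ℓ.choose 2 := by
      refine hℓ.dvd_choose_self (by norm_num) ?_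
      rcases hℓ.eq_two_or_odd' with h | h
      · subst h; exact absurd hodd (by decide)
      · have := hℓ.two_le
        rcases this.lt_or_eq with h | h
        · exact h
        · subst h; exact absurd hodd (by decide)
    obtain ⟨k, hk⟩ := h2
    congr 1
    · rw [hk, mul_nsmul', ex_nsmul, ex_nsmul]; simp
    · ext1 j; exact ex_nsmul ℓ _
    · ext1 j; exact ex_nsmul ℓ _
  · have e := ex_center_eq ℓ hℓ γ F ζ hζ1 hζ
    rw [← Nat.card_congr ((Subgroup.center ↥(exH ℓ γ F ζ hζ1)).equivMapOfInjective _
      (Subgroup.subtype_injective _)).toEquiv.symm, e]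
    let φ : Fin ℓ → exZ ℓ γ F ζ hζ1 := fun c => ⟨exU ℓ γ F ζ hζ1 c 0 0, _, rfl⟩
    have hφ : Function.Bijective φ := by
      constructor
      · intro c c' e
        exact (exU_inj ℓ hℓ γ F ζ hζ1 hζ (congrArg Subtype.val e)).1
      · rintro ⟨_, c, rfl⟩
        exact ⟨c, rfl⟩
    rw [← Nat.card_eq_of_bijective φ hφ]
    simp
end

section
/- Let m be a natural number and let A be a matrix over F indexed by (Fin m × ι). Then A commutes with 1 ⊗ₖ X_j and with 1 ⊗ₖ Y_j for every j : Fin γ if and only if there exists a matrix B : Matrix (Fin m) (Fin m) F with A = B ⊗ₖ 1 (where 1 denotes the identity matrix of the appropriate size). In particular, the centralizer of the basic subgroup generated by the I_m ⊗ X_j and I_m ⊗ Y_j in GL(m·ℓ^γ, F) consists exactly of the matrices B ⊗ I_{ℓ^γ} with B ∈ GL(m, F), which is the key content of Lemma 6.5(1): C⁰_{m,α,γ} = C⁰_{m,α} ⊗ I_γ. -/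
open Matrix Kronecker

theorem aux_update {ℓ γ : ℕ} [NeZero ℓ] (hℓ : 1 < ℓ) {F : Type} (D : (Fin γ → Fin ℓ) → F)
    (hD : ∀ j f, D (Function.update f j (f j + 1)) = D f) (j : Fin γ) (f : Fin γ → Fin ℓ) :
    ∀ (k : ℕ) (hk : k < ℓ), D (Function.update f j ⟨k, hk⟩) = D (Function.update f j 0) := by
  intro k
  induction k with
  | zero => intro hk; rfl
  | succ k ih =>
    intro hk
    rw [← ih (by omega), ← hD j (Function.update f j ⟨k, by omega⟩)]
    have : (⟨k, by omega⟩ : Fin ℓ) + 1 = ⟨k + 1, hk⟩ := by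
      apply Fin.ext
      have h1 : ((1 : Fin ℓ) : ℕ) = 1 := Nat.mod_eq_of_lt hℓ
      rw [Fin.val_add, h1]
      exact Nat.mod_eq_of_lt hk
    simp [this]

theorem aux_const {ℓ γ : ℕ} [NeZero ℓ] (hℓ : 1 < ℓ) {F : Type} (D : (Fin γ → Fin ℓ) → F)
    (hD : ∀ j f, D (Function.update f j (f j + 1)) = D f) (f : Fin γ → Fin ℓ) :
    D f = D 0 := by
  have key : ∀ s : Finset (Fin γ), D f = D (fun i => if i ∈ s then 0 else f i) := by
    intro s
    induction s using Finset.induction_on with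
    | empty => simp
    | insert j s hj ih =>
      rw [ih]
      have h := aux_update hℓ D hD j (fun i => if i ∈ s then 0 else f i) (f j) (f j).2
      convert h using 2
      · ext i
        by_cases hi : i = j
        · subst hi; simp [hj]
        · simp [hi]
      · ext i
        by_cases hi : i = j
        · subst hi; simp
        · simp [hi]
  have := key Finset.univ
  simp only [Finset.mem_univ, if_true] at this
  exact this

theorem shift_inj {ℓ γ : ℕ} [NeZero ℓ] (j : Fin γ) (f g : Fin γ → Fin ℓ) :
    Function.update f j (f j + 1) = Function.update g j (g j + 1) ↔ f = g := by
  constructor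
  · intro h
    ext i
    have hi := congrFun h i
    by_cases hij : i = j
    · subst hij
      simp at hi
      rw [hi]
    · simp [hij] at hi
      rw [hi]
  · rintro rfl; rfl

/-- A matrix `A` indexed by `Fin m × (Fin γ → Fin ℓ)` commutes with
all the matrices `1 ⊗ₖ X_j` and `1 ⊗ₖ Y_j` if and only if `A = B ⊗ₖ 1` for some
`B : Matrix (Fin m) (Fin m) F`.  This is the key content of Lemma 6.5(1):
`C⁰_{m,α,γ} = C⁰_{m,α} ⊗ I_γ`. -/
theorem stmt_6 (ℓ : ℕ) (hℓ : ℓ.Prime) [NeZero ℓ] (F : Type) [Field F]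
    (ζ : F) (hζ1 : ζ ^ ℓ = 1) (hζ : ζ ≠ 1) (γ m : ℕ)
    (A : Matrix (Fin m × (Fin γ → Fin ℓ)) (Fin m × (Fin γ → Fin ℓ)) F) :
    (∀ j : Fin γ,
        A * ((1 : Matrix (Fin m) (Fin m) F) ⊗ₖ clockMatrix ℓ γ F ζ j)
          = ((1 : Matrix (Fin m) (Fin m) F) ⊗ₖ clockMatrix ℓ γ F ζ j) * A ∧
        A * ((1 : Matrix (Fin m) (Fin m) F) ⊗ₖ shiftMatrix ℓ γ F j)
          = ((1 : Matrix (Fin m) (Fin m) F) ⊗ₖ shiftMatrix ℓ γ F j) * A) ↔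
    ∃ B : Matrix (Fin m) (Fin m) F,
      A = B ⊗ₖ (1 : Matrix (Fin γ → Fin ℓ) (Fin γ → Fin ℓ) F) := by
  have hl : 1 < ℓ := hℓ.one_lt
  constructor
  · intro h
    have hX : ∀ j a f b g, A (a, f) (b, g) * ζ ^ (g j : ℕ) = ζ ^ (f j : ℕ) * A (a, f) (b, g) := by
      intro j a f b g
      have := congrFun (congrFun (h j).1 (a, f)) (b, g)
      simpa [Matrix.mul_apply, Fintype.sum_prod_type, clockMatrix, Matrix.kroneckerMap_apply,
        Matrix.one_apply, Matrix.diagonal_apply] using this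
    have hY : ∀ j a f b g, A (a, Function.update f j (f j + 1)) (b, Function.update g j (g j + 1))
        = A (a, f) (b, g) := by
      intro j a f b g
      have := congrFun (congrFun (h j).2 (a, Function.update f j (f j + 1))) (b, g)
      simpa [Matrix.mul_apply, Fintype.sum_prod_type, shiftMatrix, Matrix.kroneckerMap_apply,
        Matrix.one_apply, shift_inj] using this
    have hord : orderOf ζ = ℓ := by
      have := Fact.mk hℓ
      exact orderOf_eq_prime hζ1 hζ
    refine ⟨Matrix.of fun a b => A (a, 0) (b, 0), ?_⟩
    ext ⟨a, f⟩ ⟨b, g⟩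
    by_cases hfg : f = g
    · subst hfg
      have := aux_const hl (fun f => A (a, f) (b, f)) (fun j f => hY j a f b f) f
      simpa [Matrix.kroneckerMap_apply] using this
    · simp only [Matrix.kroneckerMap_apply, Matrix.one_apply, hfg, if_false, mul_zero]
      obtain ⟨j, hj⟩ := Function.ne_iff.mp hfg
      by_contra hA
      apply hj
      have h1 := hX j a f b g
      rw [mul_comm] at h1
      have h2 := mul_right_cancel₀ hA h1
      apply Fin.ext
      refine (pow_injOn_Iio_orderOf (x := ζ) ?_ ?_ h2).symm <;> simp [hord]
  · rintro ⟨B, rfl⟩ j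
    simp [← Matrix.mul_kronecker_mul]
end

section
/- The F-subalgebra of the matrix algebra Matrix ι ι F generated by the clock matrices X_j and the shift matrices Y_j, for all j : Fin γ, is the whole matrix algebra: Algebra.adjoin F ({X_j : j} ∪ {Y_j : j}) = ⊤. (That is, the basic subgroup generated by clock and shift matrices acts irreducibly on F^(ℓ^γ); this underlies the computation of its centralizer in Lemma 6.5.) -/
open Matrix

lemma reach_aux (ℓ γ : ℕ) [NeZero ℓ] (P : (Fin γ → Fin ℓ) → Prop)
    (hP : ∀ g j, P g → P (Function.update g j (g j + 1))) (h f : Fin γ → Fin ℓ) (hh : P h) :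
    P f := by
  have h1 : ∀ (n : ℕ) g j, P g → P (Function.update g j (g j + Fin.ofNat ℓ n)) := by
    intro n
    induction n with
    | zero =>
      intro g j hg
      have e : g j + Fin.ofNat ℓ 0 = g j := by
        change g j + 0 = g j
        simp
      rw [e, Function.update_eq_self]
      exact hg
    | succ n ih =>
      intro g j hg
      have := hP _ j (ih g j hg)
      rw [Function.update_self, Function.update_idem] at this
      convert this using 2
      rw [add_assoc]
      congr 1
      ext
      simp [Fin.val_add]
  have h2 : ∀ g j b, P g → P (Function.update g j b) := by
    intro g j b hg
    have := h1 (b - g j).val g j hg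
    have e : g j + Fin.ofNat ℓ (b - g j).val = b := by
      simp
    rwa [e] at this
  have h3 : ∀ s : Finset (Fin γ), P (fun j => if j ∈ s then f j else h j) := by
    intro s
    induction s using Finset.induction_on with
    | empty => simpa using hh
    | insert a s ha ih =>
      convert h2 _ a (f a) ih using 1
      ext j
      by_cases hj : j = a
      · subst hj; simp
      · simp [hj]
  simpa using h3 Finset.univ

/-- The `F`-subalgebra of the matrix algebra generated by the clock
and shift matrices is the whole matrix algebra; i.e. the basic subgroup acts
irreducibly on `F^(ℓ^γ)`. -/
theorem stmt_7 (ℓ : ℕ) (hℓ : ℓ.Prime) [NeZero ℓ] (F : Type) [Field F]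
    (ζ : F) (hζ1 : ζ ^ ℓ = 1) (hζ : ζ ≠ 1) (γ : ℕ) :
    Algebra.adjoin F
      ({M : Matrix (Fin γ → Fin ℓ) (Fin γ → Fin ℓ) F | ∃ j, M = clockMatrix ℓ γ F ζ j} ∪
       {M : Matrix (Fin γ → Fin ℓ) (Fin γ → Fin ℓ) F | ∃ j, M = shiftMatrix ℓ γ F j}) = ⊤ := by
  set A := Algebra.adjoin F
      ({M : Matrix (Fin γ → Fin ℓ) (Fin γ → Fin ℓ) F | ∃ j, M = clockMatrix ℓ γ F ζ j} ∪
       {M : Matrix (Fin γ → Fin ℓ) (Fin γ → Fin ℓ) F | ∃ j, M = shiftMatrix ℓ γ F j}) with hA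
  have hX : ∀ j, clockMatrix ℓ γ F ζ j ∈ A := fun j =>
    Algebra.subset_adjoin (Or.inl ⟨j, rfl⟩)
  have hY : ∀ j, shiftMatrix ℓ γ F j ∈ A := fun j =>
    Algebra.subset_adjoin (Or.inr ⟨j, rfl⟩)
  have hprim : IsPrimitiveRoot ζ ℓ := by
    have : orderOf ζ = ℓ := by
      haveI := Fact.mk hℓ
      exact orderOf_eq_prime hζ1 hζ
    rw [← this]
    exact IsPrimitiveRoot.orderOf ζ
  let S : Subalgebra F ((Fin γ → Fin ℓ) → F) :=
    A.comap (Matrix.diagonalAlgHom (n := Fin γ → Fin ℓ) (α := F) F)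
  have hS : ∀ j, (fun g : Fin γ → Fin ℓ => ζ ^ (g j : ℕ)) ∈ S := fun j => hX j
  have hdiag : ∀ f : Fin γ → Fin ℓ, Matrix.single f f (1 : F) ∈ A := by
    intro f
    have hp : (∏ j : Fin γ, ∏ a ∈ Finset.univ.erase (f j),
        ((ζ ^ (f j : ℕ) - ζ ^ (a : ℕ))⁻¹ • ((fun g : Fin γ → Fin ℓ => ζ ^ (g j : ℕ))
          - algebraMap F ((Fin γ → Fin ℓ) → F) (ζ ^ (a : ℕ))))) ∈ S := by
      refine prod_mem fun j _ => prod_mem fun a _ => ?_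
      exact S.smul_mem (S.sub_mem (hS j) (S.algebraMap_mem _)) _
    have he : (∏ j : Fin γ, ∏ a ∈ Finset.univ.erase (f j),
        ((ζ ^ (f j : ℕ) - ζ ^ (a : ℕ))⁻¹ • ((fun g : Fin γ → Fin ℓ => ζ ^ (g j : ℕ))
          - algebraMap F ((Fin γ → Fin ℓ) → F) (ζ ^ (a : ℕ))))) = Pi.single f 1 := by
      ext g
      simp only [Finset.prod_apply, Pi.smul_apply, Pi.sub_apply, Pi.algebraMap_apply,
        Algebra.algebraMap_self, RingHom.id_apply, smul_eq_mul]
      by_cases hg : g = f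
      · subst hg
        rw [Pi.single_eq_same]
        refine Finset.prod_eq_one fun j _ => Finset.prod_eq_one fun a ha => ?_
        apply inv_mul_cancel₀
        intro h0
        apply Finset.ne_of_mem_erase ha
        exact Fin.ext (hprim.pow_inj a.2 (g j).2 (sub_eq_zero.mp h0).symm)
      · rw [Pi.single_eq_of_ne hg]
        obtain ⟨j, hj⟩ := Function.ne_iff.mp hg
        refine Finset.prod_eq_zero (Finset.mem_univ j) ?_
        refine Finset.prod_eq_zero (i := g j) (by simp [hj]) ?_
        simp
    rw [he] at hp
    have : Matrix.diagonal (Pi.single f (1 : F)) ∈ A := hp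
    rwa [Matrix.diagonal_single] at this
  have hsingle : ∀ f h : Fin γ → Fin ℓ, Matrix.single f h (1 : F) ∈ A := by
    intro f h
    refine reach_aux ℓ γ (fun f => Matrix.single f h (1 : F) ∈ A) ?_ h f (hdiag h)
    intro g j hg
    have := A.mul_mem (hY j) hg
    convert this using 1
    ext a b
    by_cases hb : b = h
    · subst hb
      simp [shiftMatrix, Matrix.single_apply, eq_comm]
    · rw [Matrix.mul_single_apply_of_ne _ _ _ _ _ hb]
      simp [Matrix.single_apply, Ne.symm hb]
  rw [eq_top_iff]
  rintro M -
  rw [Matrix.matrix_eq_sum_single M]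
  refine sum_mem fun i _ => sum_mem fun j _ => ?_
  have := A.smul_mem (hsingle i j) (M i j)
  simpa using this
end

section
/- Let F be a finite field of characteristic p, ℓ a prime different from p, b ≥ 1, and ζα ∈ F an element of multiplicative order ℓ^b; set ζ = ζα^(ℓ^(b−1)), so ζ has order ℓ. Let R be the subgroup of the unit group of Matrix ι ι F generated by the scalar matrix ζα • 1 together with the clock matrices X_j and shift matrices Y_j for all j : Fin γ (the clock matrices being formed with this ζ). Then the entrywise Frobenius map, which sends a matrix to the matrix obtained by applying x ↦ x^p to every entry (a ring endomorphism of Matrix ι ι F), maps R bijectively onto itself; in particular it sends ζα • 1 to (ζα • 1)^p, each X_j to X_j^p, and fixes each Y_j. (This is the matrix-level content of the first assertion of Lemma 6.7: field automorphisms stabilize the twisted basic subgroups.) -/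
open Matrix

/-- The twisted basic subgroup `R⁰_{1,α,γ}`: the subgroup of the unit group of the
matrix ring generated by the scalar matrix `ζα • 1` together with the clock and shift
matrices. -/
def basicSubgroup (ℓ γ : ℕ) [NeZero ℓ] (F : Type) [Field F] (ζα ζ : F) :
    Subgroup (Matrix (Fin γ → Fin ℓ) (Fin γ → Fin ℓ) F)ˣ :=
  Subgroup.closure {u : (Matrix (Fin γ → Fin ℓ) (Fin γ → Fin ℓ) F)ˣ |
    (u : Matrix (Fin γ → Fin ℓ) (Fin γ → Fin ℓ) F)
        = ζα • (1 : Matrix (Fin γ → Fin ℓ) (Fin γ → Fin ℓ) F) ∨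
    (∃ j, (u : Matrix (Fin γ → Fin ℓ) (Fin γ → Fin ℓ) F) = clockMatrix ℓ γ F ζ j) ∨
    ∃ j, (u : Matrix (Fin γ → Fin ℓ) (Fin γ → Fin ℓ) F) = shiftMatrix ℓ γ F j}

/-- Let `F` be a finite field of characteristic `p`, `ℓ` a prime
different from `p`, `b ≥ 1`, `ζα ∈ F` of multiplicative order `ℓ^b`, and
`ζ = ζα^(ℓ^(b-1))` of order `ℓ`.  The entrywise Frobenius map `Φ` (the ring
endomorphism of the matrix ring applying `x ↦ x^p` to every entry) maps the basic
subgroup `R` generated by `ζα • 1` and the clock and shift matrices bijectively onto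
itself; in particular it sends `ζα • 1` to `(ζα • 1)^p`, each `X_j` to `X_j^p`, and
fixes each `Y_j`. -/
theorem stmt_8 (p ℓ : ℕ) (hp : p.Prime) (hℓ : ℓ.Prime) (hℓp : ℓ ≠ p) [NeZero ℓ]
    (F : Type) [Field F] [Fintype F] [CharP F p]
    (b : ℕ) (hb : 1 ≤ b) (ζα : F) (hζα : orderOf ζα = ℓ ^ b)
    (ζ : F) (hζ : ζ = ζα ^ ℓ ^ (b - 1)) (γ : ℕ)
    (Φ : Matrix (Fin γ → Fin ℓ) (Fin γ → Fin ℓ) F →+*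
         Matrix (Fin γ → Fin ℓ) (Fin γ → Fin ℓ) F)
    (hΦ : ∀ A : Matrix (Fin γ → Fin ℓ) (Fin γ → Fin ℓ) F, Φ A = A.map fun x => x ^ p) :
    Set.BijOn (Units.map Φ.toMonoidHom)
      (basicSubgroup ℓ γ F ζα ζ : Set (Matrix (Fin γ → Fin ℓ) (Fin γ → Fin ℓ) F)ˣ)
      (basicSubgroup ℓ γ F ζα ζ : Set (Matrix (Fin γ → Fin ℓ) (Fin γ → Fin ℓ) F)ˣ) ∧
    Φ (ζα • (1 : Matrix (Fin γ → Fin ℓ) (Fin γ → Fin ℓ) F))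
      = (ζα • (1 : Matrix (Fin γ → Fin ℓ) (Fin γ → Fin ℓ) F)) ^ p ∧
    (∀ j, Φ (clockMatrix ℓ γ F ζ j) = clockMatrix ℓ γ F ζ j ^ p) ∧
    ∀ j, Φ (shiftMatrix ℓ γ F j) = shiftMatrix ℓ γ F j := by
  have hp0 : p ≠ 0 := hp.ne_zero
  have h1 : Φ (ζα • (1 : Matrix (Fin γ → Fin ℓ) (Fin γ → Fin ℓ) F))
      = (ζα • (1 : Matrix (Fin γ → Fin ℓ) (Fin γ → Fin ℓ) F)) ^ p := by
    rw [hΦ, smul_pow, one_pow]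
    ext i j
    by_cases h : i = j
    · subst h
      simp
    · simp [Matrix.one_apply_ne h, hp0]
  have h2 : ∀ j, Φ (clockMatrix ℓ γ F ζ j) = clockMatrix ℓ γ F ζ j ^ p := by
    intro j
    rw [hΦ, clockMatrix, Matrix.diagonal_pow, Matrix.diagonal_map (by simp [hp0])]
    rfl
  have h3 : ∀ j, Φ (shiftMatrix ℓ γ F j) = shiftMatrix ℓ γ F j := by
    intro j
    rw [hΦ]
    ext f g
    simp only [Matrix.map_apply, shiftMatrix]
    split_ifs <;> simp [hp0]
  refine ⟨?_, h1, h2, h3⟩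
  have hinj : Function.Injective (Units.map Φ.toMonoidHom) := by
    haveI : Fact p.Prime := ⟨hp⟩
    intro u v huv
    have h : Φ (u : Matrix (Fin γ → Fin ℓ) (Fin γ → Fin ℓ) F) = Φ v :=
      congrArg Units.val huv
    rw [hΦ, hΦ] at h
    ext i j
    have h' := congrFun (congrFun h i) j
    exact frobenius_inj F p h'
  have hmaps : Set.MapsTo (Units.map Φ.toMonoidHom)
      (basicSubgroup ℓ γ F ζα ζ : Set (Matrix (Fin γ → Fin ℓ) (Fin γ → Fin ℓ) F)ˣ)
      (basicSubgroup ℓ γ F ζα ζ : Set (Matrix (Fin γ → Fin ℓ) (Fin γ → Fin ℓ) F)ˣ) := by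
    have hle : basicSubgroup ℓ γ F ζα ζ ≤
        (basicSubgroup ℓ γ F ζα ζ).comap (Units.map Φ.toMonoidHom) := by
      conv_lhs => rw [basicSubgroup]
      rw [Subgroup.closure_le]
      intro u hu
      have hm : u ∈ basicSubgroup ℓ γ F ζα ζ := Subgroup.subset_closure hu
      have key : Units.map Φ.toMonoidHom u = u ^ p ∨ Units.map Φ.toMonoidHom u = u := by
        rcases hu with h | ⟨j, h⟩ | ⟨j, h⟩
        · left
          apply Units.ext
          change Φ u = _
          rw [Units.val_pow_eq_pow_val, h, h1]
        · left
          apply Units.ext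
          change Φ u = _
          rw [Units.val_pow_eq_pow_val, h, h2]
        · right
          apply Units.ext
          change Φ u = _
          rw [h, h3]
      change Units.map Φ.toMonoidHom u ∈ basicSubgroup ℓ γ F ζα ζ
      rcases key with h | h
      · rw [h]; exact pow_mem hm p
      · rw [h]; exact hm
    exact fun u hu => hle hu
  haveI : Finite (Matrix (Fin γ → Fin ℓ) (Fin γ → Fin ℓ) F) :=
    inferInstanceAs (Finite ((Fin γ → Fin ℓ) → (Fin γ → Fin ℓ) → F))
  refine ⟨hmaps, hinj.injOn, ?_⟩
  intro v hv
  obtain ⟨w, hw⟩ := Finite.surjective_of_injective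
    (hmaps.restrict_inj.mpr hinj.injOn) ⟨v, hv⟩
  exact ⟨w, w.2, congrArg Subtype.val hw⟩
end

section
/- Let A be a finite abelian group, B a subgroup of A, θ : B →* ℂˣ a homomorphism, and τ an automorphism of A such that τ(b) = b for all b ∈ B and τ(a) * a⁻¹ ∈ B for all a ∈ A. Define λ : A → ℂˣ by λ(a) = θ(τ(a) * a⁻¹). Then: (1) λ is a group homomorphism which is trivial on B; (2) for every homomorphism θ̃ : A →* ℂˣ extending θ, the composite θ̃ ∘ τ is again an extension of θ and satisfies θ̃ ∘ τ = λ * θ̃ (pointwise product); (3) consequently, every extension of θ to A is fixed by precomposition with τ if and only if λ is the trivial homomorphism, and if λ * λ = 1 with λ ≠ 1 then the map θ̃ ↦ θ̃ ∘ τ is a fixed-point-free involution on the set of extensions of θ to A, so the extensions are partitioned into pairs swapped by τ. (This is the abstract mechanism behind Lemmas 6.13–6.16: the diagonal automorphism τ fixes all extensions of θ_{Γ,γ} for Γ ≠ X+1 and interchanges the 2e extensions of θ_{X+1,γ} in e pairs.) -/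
/-- Let `A` be a finite abelian group, `B ≤ A`, `θ : B →* ℂˣ`, and
`τ` an automorphism of `A` fixing `B` pointwise with `τ(a)⁻¹·a ∈ B` for all `a`.
Let `λ(a) = θ(τ(a)·a⁻¹)`.  Then (1) `λ` is a homomorphism trivial on `B`;
(2) for every extension `θ̃` of `θ` to `A`, `θ̃ ∘ τ` is again an extension and
`θ̃ ∘ τ = λ · θ̃`; (3) every extension is fixed by precomposition with `τ` iff `λ` is
trivial, and if `λ² = 1` with `λ ≠ 1` then `θ̃ ↦ θ̃ ∘ τ` is a fixed-point-free
involution on the set of extensions of `θ`. -/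
theorem stmt_9 (A : Type) [CommGroup A] [Finite A] (B : Subgroup A)
    (θ : B →* ℂˣ) (τ : A ≃* A)
    (hτB : ∀ b : B, τ (b : A) = (b : A)) (hτA : ∀ a : A, τ a * a⁻¹ ∈ B)
    (lam : A → ℂˣ) (hlam : ∀ a : A, lam a = θ ⟨τ a * a⁻¹, hτA a⟩) :
    ((∀ a a' : A, lam (a * a') = lam a * lam a') ∧ ∀ b : B, lam (b : A) = 1) ∧
    (∀ θt : A →* ℂˣ, (∀ b : B, θt (b : A) = θ b) →
      ((∀ b : B, θt (τ (b : A)) = θ b) ∧ ∀ a : A, θt (τ a) = lam a * θt a)) ∧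
    ((∀ θt : A →* ℂˣ, (∀ b : B, θt (b : A) = θ b) → ∀ a : A, θt (τ a) = θt a) ↔
      ∀ a : A, lam a = 1) ∧
    ((∀ a : A, lam a * lam a = 1) → (lam ≠ fun _ => 1) →
      ∀ θt : A →* ℂˣ, (∀ b : B, θt (b : A) = θ b) →
        (∀ b : B, (θt.comp τ.toMonoidHom) (b : A) = θ b) ∧
        (θt.comp τ.toMonoidHom).comp τ.toMonoidHom = θt ∧
        θt.comp τ.toMonoidHom ≠ θt) := by
  have key : ∀ θt : A →* ℂˣ, (∀ b : B, θt (b : A) = θ b) →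
      ∀ a : A, θt (τ a) = lam a * θt a := by
    intro θt h a
    rw [hlam, ← h, ← map_mul]
    simp
  have hB : ∀ b : B, lam (b : A) = 1 := by
    intro b
    rw [hlam, ← map_one θ]
    congr 1
    apply Subtype.ext
    simp [hτB]
  obtain ⟨θ₀, hθ₀⟩ := MonoidHom.domRestrict_surjective ℂ B θ
  have h₀ : ∀ b : B, θ₀ (b : A) = θ b := fun b => by rw [← hθ₀]; rfl
  refine ⟨⟨?_, hB⟩, ?_, ⟨?_, ?_⟩, ?_⟩
  · intro a a'
    rw [hlam, hlam, hlam, ← map_mul]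
    congr 1
    apply Subtype.ext
    simp only [map_mul, mul_inv, Subgroup.coe_mul]
    exact mul_mul_mul_comm _ _ _ _
  · intro θt h
    exact ⟨fun b => by rw [hτB, h], key θt h⟩
  · intro H a
    have h1 := key θ₀ h₀ a
    rw [H θ₀ h₀ a] at h1
    exact right_eq_mul.mp h1
  · intro H θt h a
    rw [key θt h, H, one_mul]
  · intro h2 hne θt h
    have hc : ∀ b : B, (θt.comp τ.toMonoidHom) (b : A) = θ b := by
      intro b
      change θt (τ b) = θ b
      rw [hτB, h]
    refine ⟨hc, ?_, ?_⟩
    · apply MonoidHom.ext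
      intro a
      have h1 : θt (τ (τ a)) = lam a * θt (τ a) := key _ hc a
      change θt (τ (τ a)) = θt a
      rw [h1, key θt h, ← mul_assoc, h2, one_mul]
    · intro he
      apply hne
      funext a
      have h1 := key θt h a
      have h3 : θt (τ a) = θt a := DFunLike.congr_fun he a
      rw [h3] at h1
      exact right_eq_mul.mp h1
end
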